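/- arXiv:2308.09104 — 3 statements merged into one kernel-verified Lean document; each statement's English description precedes it below -/
import Mathlib

section
/- Lemma (prior mass of the sieve complement, SS-GHS). Let ε_n → 0, n ε_n² → ∞ and n ε_n² / Σ_{l=0}^L u_l → ∞, where u_l = log n + log(L+1) + Σ_{m=0}^L log k_m + Σ_{m=0}^L log(k_m+1) + log c_reg². Define s_l° + 1 = n ε_n² / Σ_{m=0}^L u_m and (B_l°)² = 2(n ε_n² + log(k_l+1) + log k_{l+1} + log(L+1) + log 2)(k_l+1)² c_reg², and assume λ_l k_{l+1}/s_l° → 0 and (Σ_l u_l) log L = o(n ε_n²). Then there is a constant C_3 > 0 such that, for all n sufficiently large, the SS-GHS marginal prior satisfies Π̃({θ : η_θ ∉ F(L, k, s°, B°)}) ≤ exp(−C_3 n ε_n² / Σ_{l=0}^L u_l). -/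
open MeasureTheory ProbabilityTheory Filter

namespace SSNN

noncomputable section

/-! ### The statistical model -/

/-- The unit cube `[0,1]^p`. -/
def cube (p : ℕ) : Set (Fin p → ℝ) := Set.univ.pi fun _ => Set.Icc (0 : ℝ) 1

/-- Gaussian conditional density with mean `m` and unit variance, evaluated at `y`. -/
def gpdf (m y : ℝ) : ℝ := (Real.sqrt (2 * Real.pi))⁻¹ * Real.exp (-(y - m) ^ 2 / 2)

/-- Joint law of one observation `(x, y)`: `x ~ Uniform([0,1]^p)`, `y | x ~ N(η(x), 1)`. -/
def jointLaw (p : ℕ) (η : (Fin p → ℝ) → ℝ) : Measure ((Fin p → ℝ) × ℝ) :=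
  (volume.restrict (cube p)).bind fun x => (gaussianReal (η x) 1).map fun y => (x, y)

/-- Law of `n` i.i.d. observations. -/
def dataLaw (p n : ℕ) (η : (Fin p → ℝ) → ℝ) : Measure (Fin n → (Fin p → ℝ) × ℝ) :=
  Measure.pi fun _ => jointLaw p η

/-- Likelihood of the data `D` under regression function `η`. -/
def lik (p n : ℕ) (η : (Fin p → ℝ) → ℝ) (D : Fin n → (Fin p → ℝ) × ℝ) : ℝ :=
  ∏ i, gpdf (η ((D i).1)) ((D i).2)

/-- Squared Hellinger distance between the models indexed by regression functions. -/
def hellSq (p : ℕ) (η₀ η₁ : (Fin p → ℝ) → ℝ) : ℝ :=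
  (1 / 2) * ∫ x in cube p, ∫ y : ℝ, (Real.sqrt (gpdf (η₁ x) y) - Real.sqrt (gpdf (η₀ x) y)) ^ 2

/-- Hellinger distance. -/
def dH (p : ℕ) (η₀ η₁ : (Fin p → ℝ) → ℝ) : ℝ := Real.sqrt (hellSq p η₀ η₁)

/-- Kullback–Leibler divergence between the models indexed by regression functions. -/
def dKLreg (p : ℕ) (η₀ η₁ : (Fin p → ℝ) → ℝ) : ℝ :=
  ∫ x in cube p, ∫ y : ℝ, gpdf (η₀ x) y * Real.log (gpdf (η₀ x) y / gpdf (η₁ x) y)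

/-- Kullback–Leibler divergence between two measures. -/
def KLm {Ω : Type*} [MeasurableSpace Ω] (μ ν : Measure Ω) : ℝ := ∫ ω, llr μ ν ω ∂μ

/-! ### The neural network -/

/-- Parameters of a network with `L+1` weight matrices and widths `k`. -/
abbrev Params (L : ℕ) (k : ℕ → ℕ) : Type :=
  ∀ l : Fin (L + 1), Fin (k (l.1 + 1)) → Fin (k l.1 + 1) → ℝ

/-- Extend a parameter to all layer indices (junk value `0` beyond `L`). -/
def extendP (L : ℕ) (k : ℕ → ℕ) (θ : Params L k) (l : ℕ) :
    Fin (k (l + 1)) → Fin (k l + 1) → ℝ :=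
  if h : l < L + 1 then θ ⟨l, h⟩ else fun _ _ => 0

/-- One affine layer: first column is the bias. -/
def layerMap {m d : ℕ} (W : Fin m → Fin (d + 1) → ℝ) (v : Fin d → ℝ) : Fin m → ℝ :=
  fun j => W j 0 + ∑ i : Fin d, W j i.succ * v i

/-- Pre-activations of layer `l+1`. -/
def preact (k : ℕ → ℕ) (ψ : ℝ → ℝ) (W : ∀ l : ℕ, Fin (k (l + 1)) → Fin (k l + 1) → ℝ)
    (x : Fin (k 0) → ℝ) : (l : ℕ) → Fin (k (l + 1)) → ℝ
  | 0 => layerMap (W 0) x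
  | l + 1 => layerMap (W (l + 1)) fun i => ψ (preact k ψ W x l i)

/-- Network output (the output layer has a single unit since `k (L+1) = 1`). -/
def nnOut (L : ℕ) (k : ℕ → ℕ) (ψ : ℝ → ℝ) (θ : Params L k) (x : Fin (k 0) → ℝ) : ℝ :=
  ∑ j, preact k ψ (extendP L k θ) x L j

/-- Network output as a function on `[0,1]^p`, using `k 0 = p`. -/
def nnOutP (L : ℕ) (k : ℕ → ℕ) (p : ℕ) (h : k 0 = p) (ψ : ℝ → ℝ) (θ : Params L k)
    (x : Fin p → ℝ) : ℝ :=
  nnOut L k ψ θ fun i => x (Fin.cast h i)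

/-- Euclidean norm of a row. -/
def rowNorm {d : ℕ} (w : Fin d → ℝ) : ℝ := Real.sqrt (∑ i, w i ^ 2)

/-- The sieve of node-sparse, norm-bounded networks. -/
def InSieve (L : ℕ) (k : ℕ → ℕ) (s B : ℕ → ℝ) (θ : Params L k) : Prop :=
  ∀ l : Fin (L + 1),
    (Nat.card {j : Fin (k (l.1 + 1)) // θ l j ≠ 0} : ℝ) ≤ s l.1 ∧
    ∀ j, rowNorm (θ l j) ≤ B l.1

/-- Squared sup-norm distance of `η₀` from the sieve. -/
def xi (p L : ℕ) (k : ℕ → ℕ) (h : k 0 = p) (ψ : ℝ → ℝ) (s B : ℕ → ℝ)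
    (η₀ : (Fin p → ℝ) → ℝ) : ℝ :=
  sInf { v | ∃ θ : Params L k, InSieve L k s B θ ∧
    v = (sSup ((fun x => |nnOutP L k p h ψ θ x - η₀ x|) '' cube p)) ^ 2 }

/-! ### Building-block distributions -/

/-- Bernoulli measure on `Bool`. -/
def bern (γ : ℝ) : Measure Bool :=
  ENNReal.ofReal γ • Measure.dirac true + ENNReal.ofReal (1 - γ) • Measure.dirac false

/-- Product of independent Gaussians. -/
def gaussRow (d : ℕ) (μ σ2 : Fin d → ℝ) : Measure (Fin d → ℝ) :=
  Measure.pi fun i => gaussianReal (μ i) (σ2 i).toNNReal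

/-- Isotropic Gaussian slab with variance `v`. -/
def slabRow (d : ℕ) (v : ℝ) : Measure (Fin d → ℝ) :=
  Measure.pi fun _ => gaussianReal 0 v.toNNReal

/-- Conditional law of a row given the inclusion indicator. -/
def rowCond (d : ℕ) (z : Bool) (v : ℝ) : Measure (Fin d → ℝ) :=
  if z then slabRow d v else Measure.dirac 0

/-- Spike-and-slab joint law of `(w, z)` in the variational family. -/
def spikeSlabRow (d : ℕ) (γ : ℝ) (μ σ2 : Fin d → ℝ) : Measure ((Fin d → ℝ) × Bool) :=
  (bern γ).bind fun z =>
    (if z then gaussRow d μ σ2 else Measure.dirac 0).map fun w => (w, z)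

/-- Log-normal distribution `LN(m, s2)` (variance parameter `s2`). -/
def logNormal (m s2 : ℝ) : Measure ℝ := (gaussianReal m s2.toNNReal).map Real.exp

/-- Gamma distribution with shape `a` and rate `r`. -/
def gammaM (a r : ℝ) : Measure ℝ := gammaMeasure a r

/-- Inverse-Gamma distribution with shape `a` and rate `r`. -/
def invGammaM (a r : ℝ) : Measure ℝ := (gammaM a r).map fun x => x⁻¹

/-- Half-Cauchy distribution `C⁺(0, s)`. -/
def halfCauchy (s : ℝ) : Measure ℝ :=
  volume.withDensity fun t =>
    ENNReal.ofReal (if 0 < t then 2 * s / (Real.pi * (s ^ 2 + t ^ 2)) else 0)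

/-- Density of `InverseGamma(a, b)`. -/
def invGammaPDF (a b t : ℝ) : ℝ :=
  if 0 < t then b ^ a / Real.Gamma a * t ^ (-a - 1) * Real.exp (-b / t) else 0

/-- Density of `T` where `√T ~ C⁺(0, s)`. -/
def sqrtHCpdf (s t : ℝ) : ℝ :=
  if 0 < t then s / (Real.pi * Real.sqrt t * (s ^ 2 + t)) else 0

/-- Density of `LN(m, σ²)` (with standard-deviation parameter `σ`). -/
def logNormalPDF (m σ x : ℝ) : ℝ :=
  if 0 < x then
    x⁻¹ * (Real.sqrt (2 * Real.pi * σ ^ 2))⁻¹ * Real.exp (-(Real.log x - m) ^ 2 / (2 * σ ^ 2))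
  else 0

/-- Density of `Gamma(a, b)` (shape `a`, rate `b`). -/
def gammaPDFfun (a b x : ℝ) : ℝ :=
  if 0 < x then b ^ a / Real.Gamma a * x ^ (a - 1) * Real.exp (-b * x) else 0

/-- Pareto-type heavy-tail assumption on a density (Assumptions A.4–A.6):
`pdf t = K t^(-a-1) L(t)` with `L(t) ≥ c₀` for `t ≥ t₀`. -/
def AssumpTail (pdf : ℝ → ℝ) (K a t0 c0 : ℝ) (Lf : ℝ → ℝ) : Prop :=
  0 < a ∧ 0 < c0 ∧ (∀ t, 0 < t → pdf t = K * t ^ (-a - 1) * Lf t) ∧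
    ∀ t, t0 ≤ t → c0 ≤ Lf t

/-! ### Spike-and-slab Group Lasso (SS-GL) -/

/-- Index set of all nodes: pairs `(l, j)`. -/
abbrev Idx (L : ℕ) (k : ℕ → ℕ) : Type := Σ l : Fin (L + 1), Fin (k (l.1 + 1))

/-- Parameter-plus-latent space for SS-GL: `(θ, z, τ², ς²)`. -/
abbrev OmegaGL (L : ℕ) (k : ℕ → ℕ) : Type :=
  Params L k × (Idx L k → Bool) × (Idx L k → ℝ) × ℝ

/-- The joint SS-GL prior on `(θ, z, τ², ς²)` (with `σ₀² = 1`). -/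
def priorGL (L : ℕ) (k : ℕ → ℕ) (lam : ℕ → ℝ) (a0 b0 : ℝ) : Measure (OmegaGL L k) :=
  (gammaM a0 b0).bind fun ς2 =>
    (Measure.pi fun i : Idx L k => gammaM ((k i.1.1 : ℝ) / 2 + 1) (ς2 / 2)).bind fun τ2 =>
      (Measure.pi fun i : Idx L k => bern (lam i.1.1)).bind fun z =>
        (Measure.pi fun i : Idx L k => rowCond (k i.1.1 + 1) (z i) (τ2 i)).map
          fun w => (fun l j => w ⟨l, j⟩, z, τ2, ς2)

/-- Marginal SS-GL prior of `θ`. -/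
def margGL (L : ℕ) (k : ℕ → ℕ) (lam : ℕ → ℝ) (a0 b0 : ℝ) : Measure (Params L k) :=
  (priorGL L k lam a0 b0).map fun ω => ω.1

/-- Variational parameters for SS-GL. -/
structure GLVar (L : ℕ) (k : ℕ → ℕ) where
  γ : Idx L k → ℝ
  μ : ∀ i : Idx L k, Fin (k i.1.1 + 1) → ℝ
  σ2 : ∀ i : Idx L k, Fin (k i.1.1 + 1) → ℝ
  mτ : Idx L k → ℝ
  sτ : Idx L k → ℝ
  mς : ℝ
  sς : ℝ

/-- The SS-GL variational measure determined by variational parameters. -/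
def qGL {L : ℕ} {k : ℕ → ℕ} (v : GLVar L k) : Measure (OmegaGL L k) :=
  ((Measure.pi fun i : Idx L k =>
      spikeSlabRow (k i.1.1 + 1) (v.γ i) (v.μ i) (v.σ2 i)).prod
    ((Measure.pi fun i : Idx L k => logNormal (v.mτ i) (v.sτ i)).prod
      (logNormal v.mς v.sς))).map
    fun ω => (fun l j => (ω.1 ⟨l, j⟩).1, fun i => (ω.1 i).2, ω.2.1, ω.2.2)

/-- The SS-GL mean-field variational family (with `γ_{Lj} = 1`). -/
def QGL (L : ℕ) (k : ℕ → ℕ) : Set (Measure (OmegaGL L k)) :=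
  { q | ∃ v : GLVar L k, (∀ j, v.γ ⟨Fin.last L, j⟩ = 1) ∧ q = qGL v }

/-- Normalized posterior obtained from a prior `μ` and a likelihood `f`. -/
def posteriorM {Ω : Type*} [MeasurableSpace Ω] (μ : Measure Ω) (f : Ω → ℝ) : Measure Ω :=
  ((μ.withDensity fun ω => ENNReal.ofReal (f ω)) Set.univ)⁻¹ •
    μ.withDensity fun ω => ENNReal.ofReal (f ω)

/-- The SS-GL posterior given the data `D`. -/
def postGL (p L : ℕ) (k : ℕ → ℕ) (lam : ℕ → ℝ) (a0 b0 : ℝ) (h : k 0 = p) (ψ : ℝ → ℝ)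
    (n : ℕ) (D : Fin n → (Fin p → ℝ) × ℝ) : Measure (OmegaGL L k) :=
  posteriorM (priorGL L k lam a0 b0) fun ω => lik p n (nnOutP L k p h ψ ω.1) D

/-! ### Spike-and-slab Group Horseshoe (SS-GHS) -/

/-- Parameter-plus-latent space for SS-GHS: `(θ, z, β, α, ζ_b, ζ_a)`. -/
abbrev OmegaGHS (L : ℕ) (k : ℕ → ℕ) : Type :=
  Params L k × (Idx L k → Bool) × (Idx L k → ℝ) × (Idx L k → ℝ) × ℝ × ℝ

/-- The joint SS-GHS (regularized group horseshoe) prior (with `σ₀² = 1`);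
slab variance `c² τ² ζ² / (c² + τ² ζ²)` with `τ² = β α`, `ζ² = ζ_a ζ_b`. -/
def priorGHS (L : ℕ) (k : ℕ → ℕ) (lam : ℕ → ℝ) (d0 creg : ℝ) : Measure (OmegaGHS L k) :=
  ((invGammaM (1 / 2) 1).prod (gammaM (1 / 2) (d0 ^ 2))).bind fun ζ =>
    ((Measure.pi fun _ : Idx L k => invGammaM (1 / 2) 1).prod
        (Measure.pi fun _ : Idx L k => gammaM (1 / 2) 1)).bind fun βα =>
      (Measure.pi fun i : Idx L k => bern (lam i.1.1)).bind fun z =>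
        (Measure.pi fun i : Idx L k =>
            rowCond (k i.1.1 + 1) (z i)
              (creg ^ 2 * (βα.1 i * βα.2 i) * (ζ.1 * ζ.2) /
                (creg ^ 2 + βα.1 i * βα.2 i * (ζ.1 * ζ.2)))).map
          fun w => (fun l j => w ⟨l, j⟩, z, βα.1, βα.2, ζ.1, ζ.2)

/-- Marginal SS-GHS prior of `θ`. -/
def margGHS (L : ℕ) (k : ℕ → ℕ) (lam : ℕ → ℝ) (d0 creg : ℝ) : Measure (Params L k) :=
  (priorGHS L k lam d0 creg).map fun ω => ω.1

/-- Variational parameters for SS-GHS. -/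
structure GHSVar (L : ℕ) (k : ℕ → ℕ) where
  γ : Idx L k → ℝ
  μ : ∀ i : Idx L k, Fin (k i.1.1 + 1) → ℝ
  σ2 : ∀ i : Idx L k, Fin (k i.1.1 + 1) → ℝ
  mβ : Idx L k → ℝ
  sβ : Idx L k → ℝ
  mα : Idx L k → ℝ
  sα : Idx L k → ℝ
  mζb : ℝ
  sζb : ℝ
  mζa : ℝ
  sζa : ℝ

/-- The SS-GHS variational measure determined by variational parameters. -/
def qGHS {L : ℕ} {k : ℕ → ℕ} (v : GHSVar L k) : Measure (OmegaGHS L k) :=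
  ((Measure.pi fun i : Idx L k =>
      spikeSlabRow (k i.1.1 + 1) (v.γ i) (v.μ i) (v.σ2 i)).prod
    (((Measure.pi fun i : Idx L k => logNormal (v.mβ i) (v.sβ i)).prod
        (Measure.pi fun i : Idx L k => logNormal (v.mα i) (v.sα i))).prod
      ((logNormal v.mζb v.sζb).prod (logNormal v.mζa v.sζa)))).map
    fun ω => (fun l j => (ω.1 ⟨l, j⟩).1, fun i => (ω.1 i).2,
      ω.2.1.1, ω.2.1.2, ω.2.2.1, ω.2.2.2)

/-- The SS-GHS mean-field variational family (with `γ_{Lj} = 1`). -/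
def QGHS (L : ℕ) (k : ℕ → ℕ) : Set (Measure (OmegaGHS L k)) :=
  { q | ∃ v : GHSVar L k, (∀ j, v.γ ⟨Fin.last L, j⟩ = 1) ∧ q = qGHS v }

/-- The SS-GHS posterior given the data `D`. -/
def postGHS (p L : ℕ) (k : ℕ → ℕ) (lam : ℕ → ℝ) (d0 creg : ℝ) (h : k 0 = p) (ψ : ℝ → ℝ)
    (n : ℕ) (D : Fin n → (Fin p → ℝ) × ℝ) : Measure (OmegaGHS L k) :=
  posteriorM (priorGHS L k lam d0 creg) fun ω => lik p n (nnOutP L k p h ψ ω.1) D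

/-! ### Rate quantities -/

/-- `u_l` for Theorems 1 and 3 (SS-GL version): the quantity does not depend on `l`. -/
def uGLa (n L : ℕ) (k : ℕ → ℕ) : ℝ :=
  Real.log n + Real.log L + (∑ m ∈ Finset.range (L + 1), Real.log (k m)) +
    ∑ m ∈ Finset.range (L + 1), Real.log (k (m + 1))

/-- `u_l` for the SS-GHS theorem. -/
def uGHSa (n L : ℕ) (k : ℕ → ℕ) (creg : ℝ) : ℝ :=
  uGLa n L k + Real.log (creg ^ 2)

/-- `u_l` in the auxiliary lemmas (SS-GL form). -/
def uLem (n L : ℕ) (k : ℕ → ℕ) : ℝ :=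
  Real.log n + Real.log ((L : ℝ) + 1) + (∑ m ∈ Finset.range (L + 1), Real.log (k m)) +
    ∑ m ∈ Finset.range (L + 1), Real.log ((k m : ℝ) + 1)

/-- `u_l` in the auxiliary lemmas (SS-GHS form). -/
def uLemGHS (n L : ℕ) (k : ℕ → ℕ) (creg : ℝ) : ℝ :=
  uLem n L k + Real.log (creg ^ 2)

/-- `ϑ_l` with generic penalty `pen l` on the effective node strength `B_l²/(k_l+1)`. -/
def thGen (n L : ℕ) (k : ℕ → ℕ) (B : ℕ → ℝ) (pen : ℕ → ℝ) (l : ℕ) : ℝ :=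
  -Real.log (B l ^ 2 / ((k l : ℝ) + 1) * pen l) + B l ^ 2 / ((k l : ℝ) + 1) * pen l +
    2 * Real.log n + 2 * (L : ℝ) + 2 * ∑ m ∈ Finset.range (L + 1), Real.log (B m)

/-- The SS-GL penalty `1/(t₀''(k_l+1))`. -/
def penGL (k : ℕ → ℕ) (t0'' : ℝ) (l : ℕ) : ℝ := 1 / (t0'' * ((k l : ℝ) + 1))

/-- The SS-GHS penalty `1/(t₀ t₀') + 1/c²`. -/
def penGHS (t0 t0' creg : ℝ) (_ : ℕ) : ℝ := 1 / (t0 * t0') + 1 / creg ^ 2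

/-- `r_l = s_l (k_l + 1) ϑ_l / n`. -/
def rGen (n L : ℕ) (k : ℕ → ℕ) (B : ℕ → ℝ) (pen : ℕ → ℝ) (s : ℕ → ℝ) (l : ℕ) : ℝ :=
  s l * ((k l : ℝ) + 1) * thGen n L k B pen l / n

/-- `Σ_{l=0}^L r_l`. -/
def sumR (n L : ℕ) (k : ℕ → ℕ) (B : ℕ → ℝ) (pen : ℕ → ℝ) (s : ℕ → ℝ) : ℝ :=
  ∑ l ∈ Finset.range (L + 1), rGen n L k B pen s l

/-- Hölder-smooth functions of order `α` on the unit cube. -/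
def HolderClass (p : ℕ) (α : ℝ) (f : (Fin p → ℝ) → ℝ) : Prop :=
  ∃ M > 0, ContDiff ℝ (⌊α⌋₊ : ℕ) f ∧
    (∀ i ≤ ⌊α⌋₊, ∀ x ∈ cube p, ‖iteratedFDeriv ℝ i f x‖ ≤ M) ∧
    ∀ x ∈ cube p, ∀ y ∈ cube p,
      ‖iteratedFDeriv ℝ ⌊α⌋₊ f x - iteratedFDeriv ℝ ⌊α⌋₊ f y‖ ≤ M * ‖x - y‖ ^ (α - ⌊α⌋₊)

end

end SSNN
namespace SSNN

noncomputable section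

/-! The horseshoe prior is a mixture, over the half-Cauchy scales, of spike-and-slab priors
whose slab variances never exceed `creg ^ 2`, so it suffices to bound the latter uniformly in
the scales. For fixed scales the number of active nodes of layer `l` is a sum of independent
Bernoulli variables of mean `λ_l k_{l+1} = o(s_l°)`, so Chernoff's bound makes the event that
it exceeds `s_l°` smaller than `exp (-C s_l°)` for any prescribed `C`, while every row is
sub-Gaussian and `B_l°` is tuned so that a union bound over all rows costs exactly
`exp (-n ε_n²)`. The sum over the `L + 1` layers is absorbed by the assumption on `log L`, and
`exp (-n ε_n²)` is negligible because `∑ u_l → ∞`. -/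

section Mixtures

variable {α β : Type*} [MeasurableSpace α] [MeasurableSpace β]

lemma bind_apply_le_of_ae_le {μ : Measure α} [IsProbabilityMeasure μ] {κ : α → Measure β}
    {s : Set β} (hs : MeasurableSet s) {C : ENNReal} (h : ∀ᵐ a ∂μ, κ a s ≤ C) :
    μ.bind κ s ≤ C :=
  calc μ.bind κ s ≤ ∫⁻ a, κ a s ∂μ := Measure.bind_apply_le κ hs
    _ ≤ ∫⁻ _, C ∂μ := lintegral_mono_ae h
    _ = C := by simp

lemma ae_prod_of_ae_of_ae {μ : Measure α} {ν : Measure β} [SFinite ν]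
    {P : α → Prop} {Q : β → Prop} (hP : ∀ᵐ a ∂μ, P a) (hQ : ∀ᵐ b ∂ν, Q b) :
    ∀ᵐ x ∂μ.prod ν, P x.1 ∧ Q x.2 :=
  (Measure.quasiMeasurePreserving_fst.ae hP).and (Measure.quasiMeasurePreserving_snd.ae hQ)

lemma ae_pi_forall_of_forall_ae {ι : Type*} [Fintype ι] {E : ι → Type*}
    [∀ i, MeasurableSpace (E i)] {μ : ∀ i, Measure (E i)} [∀ i, SigmaFinite (μ i)]
    {P : ∀ i, E i → Prop} (h : ∀ i, ∀ᵐ x ∂μ i, P i x) :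
    ∀ᵐ x ∂Measure.pi μ, ∀ i, P i (x i) :=
  ae_all_iff.2 fun i => Measure.tendsto_eval_ae_ae.eventually (h i)

end Mixtures

section SubGaussian

lemma measureReal_lt_abs_le_of_hasSubgaussianMGF {Ω : Type*} [MeasurableSpace Ω] {μ : Measure Ω}
    [IsFiniteMeasure μ] {X : Ω → ℝ} {c : NNReal} (hX : HasSubgaussianMGF X c μ) {t : ℝ}
    (ht : 0 ≤ t) :
    μ.real {ω | t < |X ω|} ≤ 2 * Real.exp (-t ^ 2 / (2 * c)) := by
  have hsub : {ω | t < |X ω|} ⊆ {ω | t ≤ X ω} ∪ {ω | t ≤ (-X) ω} := fun ω (hω : t < |X ω|) =>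
    (lt_abs.1 hω).imp le_of_lt le_of_lt
  calc μ.real {ω | t < |X ω|}
      ≤ μ.real ({ω | t ≤ X ω} ∪ {ω | t ≤ (-X) ω}) := measureReal_mono hsub
    _ ≤ μ.real {ω | t ≤ X ω} + μ.real {ω | t ≤ (-X) ω} := measureReal_union_le _ _
    _ ≤ Real.exp (-t ^ 2 / (2 * c)) + Real.exp (-t ^ 2 / (2 * c)) :=
        add_le_add (hX.measure_ge_le ht) (hX.neg.measure_ge_le ht)
    _ = 2 * Real.exp (-t ^ 2 / (2 * c)) := (two_mul _).symm

lemma hasSubgaussianMGF_id_gaussianReal {v c : NNReal} (hvc : v ≤ c) :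
    HasSubgaussianMGF id c (gaussianReal 0 v) where
  integrable_exp_mul := integrable_exp_mul_gaussianReal
  mgf_le t := by
    simp only [mgf_id_gaussianReal, zero_mul, zero_add]
    gcongr

lemma measurable_rowNorm {d : ℕ} : Measurable (rowNorm : (Fin d → ℝ) → ℝ) := by
  unfold rowNorm
  fun_prop

lemma exists_sqrt_lt_abs_of_lt_rowNorm {d : ℕ} {w : Fin d → ℝ} {B : ℝ} (hB : 0 ≤ B)
    (hw : B < rowNorm w) : ∃ i, √(B ^ 2 / d) < |w i| := by
  by_contra! hle
  have hsq : ∀ i, w i ^ 2 ≤ B ^ 2 / d := fun i => by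
    rw [← sq_abs]
    exact (Real.le_sqrt (abs_nonneg _) (by positivity)).1 (hle i)
  have hsum : ∑ i, w i ^ 2 ≤ B ^ 2 :=
    calc ∑ i, w i ^ 2 ≤ ∑ _i : Fin d, B ^ 2 / d := Finset.sum_le_sum fun i _ => hsq i
      _ = d * (B ^ 2 / d) := by simp
      _ = B ^ 2 * (d / d) := mul_div_left_comm _ _ _
      _ ≤ B ^ 2 := mul_le_of_le_one_right (sq_nonneg B) (div_self_le_one _)
  exact hw.not_ge (Real.sqrt_le_iff.2 ⟨hB, hsum⟩)

lemma measureReal_lt_rowNorm_le_of_hasSubgaussianMGF {d : ℕ} {μ : Measure (Fin d → ℝ)}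
    [IsFiniteMeasure μ] {c : NNReal} (hμ : ∀ i, HasSubgaussianMGF (fun w => w i) c μ) {B : ℝ}
    (hB : 0 ≤ B) :
    μ.real {w | B < rowNorm w} ≤ d * (2 * Real.exp (-(B ^ 2 / d) / (2 * c))) := by
  have hsub : {w : Fin d → ℝ | B < rowNorm w} ⊆ ⋃ i, {w | √(B ^ 2 / d) < |w i|} := fun _ hw =>
    Set.mem_iUnion.2 (exists_sqrt_lt_abs_of_lt_rowNorm hB hw)
  have hcoord (i : Fin d) : μ.real {w | √(B ^ 2 / d) < |w i|} ≤
      2 * Real.exp (-(B ^ 2 / d) / (2 * c)) := by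
    have htail := measureReal_lt_abs_le_of_hasSubgaussianMGF (hμ i) (Real.sqrt_nonneg (B ^ 2 / d))
    rwa [Real.sq_sqrt (by positivity)] at htail
  calc μ.real {w | B < rowNorm w}
      ≤ μ.real (⋃ i, {w | √(B ^ 2 / d) < |w i|}) := measureReal_mono hsub
    _ ≤ ∑ i, μ.real {w | √(B ^ 2 / d) < |w i|} := measureReal_iUnion_fintype_le _
    _ ≤ ∑ _i : Fin d, 2 * Real.exp (-(B ^ 2 / d) / (2 * c)) :=
        Finset.sum_le_sum fun i _ => hcoord i
    _ = d * (2 * Real.exp (-(B ^ 2 / d) / (2 * c))) := by simp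

variable {d : ℕ} {z : Bool} {v : ℝ}

instance : IsProbabilityMeasure (rowCond d z v) := by
  unfold rowCond slabRow
  split_ifs <;> infer_instance

lemma hasSubgaussianMGF_eval_rowCond {c : NNReal} (hv : v ≤ c) (i : Fin d) :
    HasSubgaussianMGF (fun w => w i) c (rowCond d z v) := by
  cases z
  · have hzero : (fun _ => 0) =ᵐ[rowCond d false v] fun w : Fin d → ℝ => w i := by
      simp [rowCond, Filter.EventuallyEq]
    exact HasSubgaussianMGF.congr
      ⟨fun t => by simp, fun t => by simpa [mgf] using (by positivity : 0 ≤ c * t ^ 2 / 2)⟩ hzero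
  · refine HasSubgaussianMGF.of_map (X := id) (measurable_pi_apply i).aemeasurable ?_
    have hmap : (rowCond d true v).map (fun w => w i) = gaussianReal 0 v.toNNReal :=
      (measurePreserving_eval (fun _ : Fin d => gaussianReal 0 v.toNNReal) i).map_eq
    rw [hmap]
    exact hasSubgaussianMGF_id_gaussianReal (Real.toNNReal_le_iff_le_coe.2 hv)

end SubGaussian

section Bernoulli

lemma isProbabilityMeasure_bern {γ : ℝ} (hγ : γ ∈ Set.Icc 0 1) : IsProbabilityMeasure (bern γ) := by
  constructor
  simp [bern, ← ENNReal.ofReal_add hγ.1 (sub_nonneg.2 hγ.2)]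

lemma mgf_ite_bern_le {γ : ℝ} (hγ : γ ∈ Set.Icc 0 1) (t : ℝ) :
    mgf (fun b : Bool => if b then 1 else 0) (bern γ) t ≤ Real.exp ((Real.exp t - 1) * γ) := by
  have hmgf : mgf (fun b : Bool => if b then 1 else 0) (bern γ) t = γ * Real.exp t + (1 - γ) := by
    rw [mgf, bern, integral_add_measure (.smul_measure .of_finite ENNReal.ofReal_ne_top)
      (.smul_measure .of_finite ENNReal.ofReal_ne_top)]
    simp [integral_smul_measure, hγ.1, hγ.2]
  calc mgf (fun b : Bool => if b then 1 else 0) (bern γ) t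
      = (Real.exp t - 1) * γ + 1 := by rw [hmgf]; ring
    _ ≤ Real.exp ((Real.exp t - 1) * γ) := Real.add_one_le_exp _

variable {ι : Type*} [Fintype ι] {γ : ι → ℝ}

lemma measureReal_pi_bern_le_card_filter_le (hγ : ∀ i, γ i ∈ Set.Icc 0 1) (S : Finset ι) (s : ℝ)
    {t : ℝ} (ht : 0 ≤ t) :
    (Measure.pi fun i => bern (γ i)).real {z | s ≤ (S.filter fun i => z i).card} ≤
      Real.exp ((Real.exp t - 1) * ∑ i ∈ S, γ i - t * s) := by
  have (i : ι) : IsProbabilityMeasure (bern (γ i)) := isProbabilityMeasure_bern (hγ i)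
  set P := Measure.pi fun i => bern (γ i)
  let X (i : ι) (z : ι → Bool) : ℝ := if z i then 1 else 0
  have hX : iIndepFun X P :=
    iIndepFun_pi (X := fun _ (b : Bool) => if b then (1 : ℝ) else 0)
      fun _ => (measurable_of_countable _).aemeasurable
  have hmgf (i : ι) : mgf (X i) P t ≤ Real.exp ((Real.exp t - 1) * γ i) := by
    have hmap := mgf_map (X := fun b : Bool => if b then (1 : ℝ) else 0) (t := t)
      (measurable_pi_apply i).aemeasurable (μ := P) (measurable_of_countable _).aestronglyMeasurable
    rw [(measurePreserving_eval (fun i => bern (γ i)) i).map_eq] at hmap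
    exact hmap.symm.trans_le (mgf_ite_bern_le (hγ i) t)
  have hcard (z : ι → Bool) : ((S.filter fun i => z i).card : ℝ) = (∑ i ∈ S, X i) z := by
    simp [X]
  simp only [hcard]
  calc P.real {z | s ≤ (∑ i ∈ S, X i) z}
      ≤ Real.exp (-t * s) * mgf (∑ i ∈ S, X i) P t :=
        measure_ge_le_exp_mul_mgf s ht Integrable.of_finite
    _ = Real.exp (-t * s) * ∏ i ∈ S, mgf (X i) P t := by
        rw [hX.mgf_sum fun _ => measurable_of_countable _]
    _ ≤ Real.exp (-t * s) * ∏ i ∈ S, Real.exp ((Real.exp t - 1) * γ i) := by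
        gcongr with i
        · exact fun _ _ => mgf_nonneg
        · exact hmgf i
    _ = Real.exp ((Real.exp t - 1) * ∑ i ∈ S, γ i - t * s) := by
        rw [← Real.exp_sum, ← Real.exp_add, Finset.mul_sum]
        ring_nf

end Bernoulli

section Gamma

variable (a r : ℝ)

lemma ae_nonneg_gammaM : ∀ᵐ x ∂gammaM a r, 0 ≤ x := by
  have hneg : {x : ℝ | ¬0 ≤ x} = Set.Iio 0 := by
    ext
    simp
  rw [ae_iff, hneg, gammaM, gammaMeasure, withDensity_apply _ measurableSet_Iio]
  exact lintegral_gammaPDF_of_nonpos le_rfl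

lemma ae_nonneg_invGammaM : ∀ᵐ x ∂invGammaM a r, 0 ≤ x := by
  rw [invGammaM, ae_map_iff (by fun_prop) measurableSet_Ici]
  filter_upwards [ae_nonneg_gammaM a r] with x hx using inv_nonneg.2 hx

variable {a r}

lemma isProbabilityMeasure_gammaM (ha : 0 < a) (hr : 0 < r) : IsProbabilityMeasure (gammaM a r) :=
  isProbabilityMeasure_gammaMeasure ha hr

lemma isProbabilityMeasure_invGammaM (ha : 0 < a) (hr : 0 < r) :
    IsProbabilityMeasure (invGammaM a r) := by
  have := isProbabilityMeasure_gammaM ha hr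
  exact Measure.isProbabilityMeasure_map (by fun_prop)

end Gamma

section SpikeSlab

variable {L : ℕ} {k : ℕ → ℕ}

lemma measurable_natCard_ne_zero {ι E : Type*} [Finite ι] [Zero E] [MeasurableSpace E]
    [MeasurableSingletonClass E] : Measurable fun x : ι → E => Nat.card {i // x i ≠ 0} := by
  classical
  have := Fintype.ofFinite ι
  have hsum (x : ι → E) : Nat.card {i // x i ≠ 0} = ∑ i, if x i = 0 then 0 else 1 := by
    simp [Nat.card_eq_fintype_card, Fintype.card_subtype, Finset.card_filter]
  simp only [hsum]
  exact Finset.measurable_sum _ fun i _ =>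
    .ite (measurable_pi_apply i (measurableSet_singleton 0)) measurable_const measurable_const

lemma measurableSet_natCard_le (l : Fin (L + 1)) (s : ℝ) :
    MeasurableSet {θ : Params L k | (Nat.card {j // θ l j ≠ 0} : ℝ) ≤ s} :=
  measurableSet_le
    (measurable_from_top.comp (measurable_natCard_ne_zero.comp (measurable_pi_apply l)))
    measurable_const

lemma measurableSet_rowNorm_le (l : Fin (L + 1)) (j : Fin (k (l.1 + 1))) (B : ℝ) :
    MeasurableSet {θ : Params L k | rowNorm (θ l j) ≤ B} :=
  measurableSet_le (measurable_rowNorm.comp (by fun_prop)) measurable_const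

lemma measurableSet_inSieve (s B : ℕ → ℝ) : MeasurableSet {θ | InSieve L k s B θ} :=
  measurableSet_setOfPred.2 <| .forall fun l =>
    (measurableSet_setOfPred.1 (measurableSet_natCard_le l (s l.1))).and <|
      .forall fun j => measurableSet_setOfPred.1 (measurableSet_rowNorm_le l j (B l.1))

lemma measure_not_inSieve_le (μ : Measure (Params L k)) (s B : ℕ → ℝ) :
    μ {θ | ¬InSieve L k s B θ} ≤ ∑ l : Fin (L + 1),
      (μ {θ | s l.1 < Nat.card {j // θ l j ≠ 0}} + ∑ j, μ {θ | B l.1 < rowNorm (θ l j)}) := by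
  have hsub : {θ | ¬InSieve L k s B θ} ⊆ ⋃ l : Fin (L + 1),
      ({θ | s l.1 < Nat.card {j // θ l j ≠ 0}} ∪ ⋃ j, {θ | B l.1 < rowNorm (θ l j)}) := by
    intro θ hθ
    simpa [InSieve, imp_iff_not_or] using hθ
  calc μ {θ | ¬InSieve L k s B θ}
      ≤ μ (⋃ l : Fin (L + 1),
          ({θ | s l.1 < Nat.card {j // θ l j ≠ 0}} ∪ ⋃ j, {θ | B l.1 < rowNorm (θ l j)})) :=
        measure_mono hsub
    _ ≤ ∑ l : Fin (L + 1),
          μ ({θ | s l.1 < Nat.card {j // θ l j ≠ 0}} ∪ ⋃ j, {θ | B l.1 < rowNorm (θ l j)}) :=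
        measure_iUnion_fintype_le _ _
    _ ≤ _ := by
        gcongr with l
        exact (measure_union_le _ _).trans (by gcongr; exact measure_iUnion_fintype_le _ _)

/-- Conditional law of the network parameters given the inclusion indicators `z` and the slab
variances `v` of all nodes. -/
def paramsCondLaw (z : Idx L k → Bool) (v : Idx L k → ℝ) : Measure (Params L k) :=
  (Measure.pi fun i => rowCond (k i.1.1 + 1) (z i) (v i)).map fun w l j => w ⟨l, j⟩

lemma measurable_curry_rows :
    Measurable fun (w : ∀ i : Idx L k, Fin (k i.1.1 + 1) → ℝ) (l : Fin (L + 1)) j => w ⟨l, j⟩ := by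
  fun_prop

variable {z : Idx L k → Bool} {v : Idx L k → ℝ}

instance : IsProbabilityMeasure (paramsCondLaw z v) :=
  Measure.isProbabilityMeasure_map measurable_curry_rows.aemeasurable

lemma measurePreserving_eval_paramsCondLaw (l : Fin (L + 1)) (j : Fin (k (l.1 + 1))) :
    MeasurePreserving (fun θ => θ l j) (paramsCondLaw z v)
      (rowCond (k l.1 + 1) (z ⟨l, j⟩) (v ⟨l, j⟩)) where
  measurable := by fun_prop
  map_eq := by
    rw [paramsCondLaw, Measure.map_map (by fun_prop) measurable_curry_rows]
    exact (measurePreserving_eval (fun i => rowCond (k i.1.1 + 1) (z i) (v i)) ⟨l, j⟩).map_eq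

lemma paramsCondLaw_lt_rowNorm_le {c : NNReal} (hv : ∀ i, v i ≤ c) (l : Fin (L + 1))
    (j : Fin (k (l.1 + 1))) {B : ℝ} (hB : 0 ≤ B) :
    paramsCondLaw z v {θ | B < rowNorm (θ l j)} ≤ ENNReal.ofReal
      ((k l.1 + 1) * (2 * Real.exp (-(B ^ 2 / (k l.1 + 1)) / (2 * c)))) := by
  have hrow := measureReal_lt_rowNorm_le_of_hasSubgaussianMGF
    (hasSubgaussianMGF_eval_rowCond (d := k l.1 + 1) (z := z ⟨l, j⟩) (hv ⟨l, j⟩)) hB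
  have hmeas : MeasurableSet {w : Fin (k l.1 + 1) → ℝ | B < rowNorm w} :=
    measurableSet_lt measurable_const measurable_rowNorm
  calc paramsCondLaw z v {θ | B < rowNorm (θ l j)}
      = rowCond (k l.1 + 1) (z ⟨l, j⟩) (v ⟨l, j⟩) {w | B < rowNorm w} :=
        (measurePreserving_eval_paramsCondLaw l j).measure_preimage hmeas.nullMeasurableSet
    _ ≤ _ := by
        rw [← ofReal_measureReal]
        exact ENNReal.ofReal_le_ofReal (mod_cast hrow)

lemma ae_eq_zero_of_indicator_eq_false (l : Fin (L + 1)) :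
    ∀ᵐ θ ∂paramsCondLaw z v, ∀ j, z ⟨l, j⟩ = false → θ l j = 0 := by
  refine ae_all_iff.2 fun j => (measurePreserving_eval_paramsCondLaw l j).quasiMeasurePreserving.ae
    (p := fun w => z ⟨l, j⟩ = false → w = 0) ?_
  cases z ⟨l, j⟩ <;> simp [rowCond]

lemma ae_natCard_ne_zero_le (l : Fin (L + 1)) :
    ∀ᵐ θ ∂paramsCondLaw z v,
      Nat.card {j // θ l j ≠ 0} ≤ (Finset.univ.filter fun j => z ⟨l, j⟩).card := by
  classical
  filter_upwards [ae_eq_zero_of_indicator_eq_false l] with θ hθ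
  rw [Nat.card_eq_fintype_card, Fintype.card_subtype]
  exact Finset.card_le_card (Finset.monotone_filter_right _ fun j _ hj =>
    Bool.ne_false_iff.1 fun hz => hj (hθ j hz))

variable (L k) in
/-- Law of the network parameters under the spike-and-slab prior with layer-wise inclusion
probabilities `lam` and given slab variances `v`. -/
def spikeSlabPrior (lam : ℕ → ℝ) (v : Idx L k → ℝ) : Measure (Params L k) :=
  (Measure.pi fun i : Idx L k => bern (lam i.1.1)).bind fun z => paramsCondLaw z v

variable {lam : ℕ → ℝ}

lemma measureReal_pi_bern_le_card_layer_le (hlam : ∀ l, lam l ∈ Set.Icc 0 1) (l : Fin (L + 1))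
    (s : ℝ) {t : ℝ} (ht : 0 ≤ t) :
    (Measure.pi fun i : Idx L k => bern (lam i.1.1)).real
        {z | s ≤ (Finset.univ.filter fun j => z ⟨l, j⟩).card} ≤
      Real.exp ((Real.exp t - 1) * (lam l.1 * k (l.1 + 1)) - t * s) := by
  simpa [Finset.filter_map, Function.comp_def, mul_comm (lam l.1)] using
    measureReal_pi_bern_le_card_filter_le (γ := fun i : Idx L k => lam i.1.1) (fun i => hlam _)
      (Finset.univ.map (Function.Embedding.sigmaMk l)) s ht

lemma spikeSlabPrior_lt_natCard_le (hlam : ∀ l, lam l ∈ Set.Icc 0 1) (l : Fin (L + 1)) (s : ℝ)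
    {t : ℝ} (ht : 0 ≤ t) :
    spikeSlabPrior L k lam v {θ | s < Nat.card {j // θ l j ≠ 0}} ≤
      ENNReal.ofReal (Real.exp ((Real.exp t - 1) * (lam l.1 * k (l.1 + 1)) - t * s)) := by
  have (i : Idx L k) : IsProbabilityMeasure (bern (lam i.1.1)) := isProbabilityMeasure_bern (hlam _)
  set P := Measure.pi fun i : Idx L k => bern (lam i.1.1)
  set D : Set (Params L k) := {θ | s < Nat.card {j // θ l j ≠ 0}} with hD
  let E : Set (Idx L k → Bool) := {z | s ≤ (Finset.univ.filter fun j => z ⟨l, j⟩).card}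
  have hDmeas : MeasurableSet D := by
    simpa only [hD, Set.compl_ofPred, not_le] using (measurableSet_natCard_le l s).compl
  have hz (z : Idx L k → Bool) : paramsCondLaw z v D ≤ E.indicator 1 z := by
    by_cases hzE : z ∈ E
    · simpa [hzE] using prob_le_one
    · rw [Set.indicator_of_notMem hzE, nonpos_iff_eq_zero, measure_eq_zero_iff_ae_notMem]
      filter_upwards [ae_natCard_ne_zero_le l] with θ hθ (hθD : s < _)
      exact hzE (hθD.le.trans (Nat.cast_le.2 hθ) : s ≤ _)
  calc spikeSlabPrior L k lam v D
      ≤ ∫⁻ z, paramsCondLaw z v D ∂P := Measure.bind_apply_le _ hDmeas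
    _ ≤ ∫⁻ z, E.indicator 1 z ∂P := lintegral_mono hz
    _ = P E := lintegral_indicator_one (Set.to_countable E).measurableSet
    _ ≤ _ := by
        rw [← ofReal_measureReal]
        exact ENNReal.ofReal_le_ofReal (measureReal_pi_bern_le_card_layer_le hlam l s ht)

lemma spikeSlabPrior_lt_rowNorm_le (hlam : ∀ l, lam l ∈ Set.Icc 0 1) {c : NNReal}
    (hv : ∀ i, v i ≤ c) (l : Fin (L + 1)) (j : Fin (k (l.1 + 1))) {B : ℝ} (hB : 0 ≤ B) :
    spikeSlabPrior L k lam v {θ | B < rowNorm (θ l j)} ≤ ENNReal.ofReal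
      ((k l.1 + 1) * (2 * Real.exp (-(B ^ 2 / (k l.1 + 1)) / (2 * c)))) := by
  have (i : Idx L k) : IsProbabilityMeasure (bern (lam i.1.1)) := isProbabilityMeasure_bern (hlam _)
  have hmeas : MeasurableSet {θ : Params L k | B < rowNorm (θ l j)} := by
    simpa only [Set.compl_ofPred, not_le] using (measurableSet_rowNorm_le l j B).compl
  exact bind_apply_le_of_ae_le hmeas <| .of_forall fun z => paramsCondLaw_lt_rowNorm_le hv l j hB

lemma spikeSlabPrior_not_inSieve_le (hlam : ∀ l, lam l ∈ Set.Icc 0 1) {c : NNReal}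
    (hv : ∀ i, v i ≤ c) (s : ℕ → ℝ) {B : ℕ → ℝ} (hB : ∀ l, 0 ≤ B l) {t : ℝ} (ht : 0 ≤ t) :
    spikeSlabPrior L k lam v {θ | ¬InSieve L k s B θ} ≤ ENNReal.ofReal (∑ l : Fin (L + 1),
      (Real.exp ((Real.exp t - 1) * (lam l.1 * k (l.1 + 1)) - t * s l.1) + k (l.1 + 1) *
        ((k l.1 + 1) * (2 * Real.exp (-(B l.1 ^ 2 / (k l.1 + 1)) / (2 * c)))))) := by
  refine (measure_not_inSieve_le _ s B).trans ?_
  rw [ENNReal.ofReal_sum_of_nonneg fun _ _ => by positivity]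
  gcongr with l
  rw [ENNReal.ofReal_add (by positivity) (by positivity), ENNReal.ofReal_mul (by positivity),
    ENNReal.ofReal_natCast]
  gcongr
  · exact spikeSlabPrior_lt_natCard_le hlam l _ ht
  · calc ∑ j, spikeSlabPrior L k lam v {θ | B l.1 < rowNorm (θ l j)}
        ≤ ∑ _j : Fin (k (l.1 + 1)), ENNReal.ofReal
            ((k l.1 + 1) * (2 * Real.exp (-(B l.1 ^ 2 / (k l.1 + 1)) / (2 * c)))) :=
          Finset.sum_le_sum fun j _ => spikeSlabPrior_lt_rowNorm_le hlam hv l j (hB _)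
      _ = _ := by simp

end SpikeSlab

section Horseshoe

variable {L : ℕ} {k : ℕ → ℕ} {lam : ℕ → ℝ} {d0 creg : ℝ}

lemma mul_div_add_le_left {a t : ℝ} (ha : 0 ≤ a) (ht : 0 ≤ t) : a * t / (a + t) ≤ a :=
  div_le_of_le_mul₀ (by positivity) ha (by gcongr; linarith)

lemma ae_nonneg_pi_invGammaM_prod_pi_gammaM {ι : Type*} [Fintype ι] {a b r q : ℝ}
    (ha : 0 < a) (hr : 0 < r) (hb : 0 < b) (hq : 0 < q) :
    ∀ᵐ x ∂(Measure.pi fun _ : ι => invGammaM a r).prod (Measure.pi fun _ : ι => gammaM b q),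
      (∀ i, 0 ≤ x.1 i) ∧ ∀ i, 0 ≤ x.2 i := by
  have := isProbabilityMeasure_invGammaM ha hr
  have := isProbabilityMeasure_gammaM hb hq
  exact ae_prod_of_ae_of_ae (ae_pi_forall_of_forall_ae fun _ => ae_nonneg_invGammaM a r)
    (ae_pi_forall_of_forall_ae fun _ => ae_nonneg_gammaM b q)

lemma margGHS_le_of_forall_spikeSlabPrior_le (hd0 : 0 < d0) {A : Set (Params L k)}
    (hA : MeasurableSet A) {C : ENNReal}
    (h : ∀ v : Idx L k → ℝ, (∀ i, v i ≤ creg ^ 2) → spikeSlabPrior L k lam v A ≤ C) :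
    margGHS L k lam d0 creg A ≤ C := by
  have := isProbabilityMeasure_invGammaM (a := 1 / 2) (by norm_num) one_pos
  have := isProbabilityMeasure_gammaM (a := 1 / 2) (by norm_num) one_pos
  have := isProbabilityMeasure_gammaM (a := 1 / 2) (by norm_num) (pow_pos hd0 2)
  have hA' : MeasurableSet ((fun ω : OmegaGHS L k => ω.1) ⁻¹' A) := measurable_fst hA
  rw [margGHS, Measure.map_apply measurable_fst hA]
  refine bind_apply_le_of_ae_le hA' ?_
  filter_upwards [ae_prod_of_ae_of_ae (ae_nonneg_invGammaM (1 / 2) 1)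
    (ae_nonneg_gammaM (1 / 2) (d0 ^ 2))] with ζ hζ
  refine bind_apply_le_of_ae_le hA' ?_
  filter_upwards [ae_nonneg_pi_invGammaM_prod_pi_gammaM one_half_pos one_pos one_half_pos
    one_pos] with βα hβα
  have hv (i : Idx L k) : creg ^ 2 * (βα.1 i * βα.2 i) * (ζ.1 * ζ.2) /
      (creg ^ 2 + βα.1 i * βα.2 i * (ζ.1 * ζ.2)) ≤ creg ^ 2 := by
    rw [mul_assoc]
    exact mul_div_add_le_left (sq_nonneg creg)
      (mul_nonneg (mul_nonneg (hβα.1 i) (hβα.2 i)) (mul_nonneg hζ.1 hζ.2))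
  refine (le_of_eq ?_).trans (h _ hv)
  rw [spikeSlabPrior, Measure.bind_apply hA' (measurable_of_countable _).aemeasurable,
    Measure.bind_apply hA (measurable_of_countable _).aemeasurable]
  refine lintegral_congr fun z => ?_
  rw [paramsCondLaw, Measure.map_apply (by fun_prop) hA', Measure.map_apply (by fun_prop) hA]
  rfl

end Horseshoe

section PrescribedBounds

lemma mul_mul_two_mul_exp_le {a b c B M N : ℝ} (ha : 1 ≤ a) (hb : 1 ≤ b) (hc : 0 < c)
    (hM : 1 ≤ M) (hN : 0 ≤ N)
    (hB : B ^ 2 =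
      2 * (N + Real.log a + Real.log b + Real.log M + Real.log 2) * a ^ 2 * c) :
    b * (a * (2 * Real.exp (-(B ^ 2 / a) / (2 * c)))) ≤ Real.exp (-N) / M := by
  set T := N + Real.log a + Real.log b + Real.log M + Real.log 2 with hT
  have hT0 : 0 ≤ T := by
    have := Real.log_nonneg ha
    have := Real.log_nonneg hb
    have := Real.log_nonneg hM
    have := Real.log_nonneg one_le_two
    positivity
  have hexponent : -(B ^ 2 / a) / (2 * c) = -(T * a) := by
    rw [hB]
    field_simp
  have hexpT : Real.exp (-T) = Real.exp (-N) / (a * b * M * 2) := by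
    rw [Real.exp_neg, Real.exp_neg, hT, Real.exp_add, Real.exp_add, Real.exp_add, Real.exp_add,
      Real.exp_log (by positivity), Real.exp_log (by positivity), Real.exp_log (by positivity),
      Real.exp_log two_pos]
    field_simp
  calc b * (a * (2 * Real.exp (-(B ^ 2 / a) / (2 * c))))
      = b * (a * (2 * Real.exp (-(T * a)))) := by rw [hexponent]
    _ ≤ b * (a * (2 * Real.exp (-T))) := by
        gcongr
        exact le_mul_of_one_le_right hT0 ha
    _ = Real.exp (-N) / M := by
        rw [hexpT]
        field_simp

variable {L : ℕ} {k : ℕ → ℕ} {lam s B : ℕ → ℝ} {d0 creg N : ℝ}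

lemma margGHS_not_inSieve_le (hd0 : 0 < d0) (hcreg : 0 < creg) (hk : ∀ l ≤ L, 1 ≤ k (l + 1))
    (hlam : ∀ l, lam l ∈ Set.Icc 0 1) (hN : 0 ≤ N) (hB0 : ∀ l, 0 ≤ B l)
    (hB : ∀ l, B l ^ 2 =
      2 * (N + Real.log ((k l : ℝ) + 1) + Real.log (k (l + 1)) + Real.log ((L : ℝ) + 1) +
        Real.log 2) * ((k l : ℝ) + 1) ^ 2 * creg ^ 2)
    {t : ℝ} (ht : 0 ≤ t) (hs : ∀ l ≤ L, Real.exp t * (lam l * k (l + 1)) ≤ s l) :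
    margGHS L k lam d0 creg {θ | ¬InSieve L k s B θ} ≤
      ENNReal.ofReal (∑ l : Fin (L + 1), Real.exp (-(t - 1) * s l.1) + Real.exp (-N)) := by
  refine margGHS_le_of_forall_spikeSlabPrior_le hd0 (measurableSet_inSieve s B).compl
    fun v hv => ?_
  refine (spikeSlabPrior_not_inSieve_le hlam (c := ⟨creg ^ 2, sq_nonneg creg⟩) hv s hB0 ht).trans
    (ENNReal.ofReal_le_ofReal ?_)
  calc _ ≤ ∑ l : Fin (L + 1), (Real.exp (-(t - 1) * s l.1) + Real.exp (-N) / ((L : ℝ) + 1)) := by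
        gcongr with l
        · have hmean0 : 0 ≤ lam l * k (l + 1) := mul_nonneg (hlam l).1 (Nat.cast_nonneg _)
          linarith [hs l l.is_le]
        · exact mul_mul_two_mul_exp_le (by simp) (mod_cast hk l l.is_le) (pow_pos hcreg 2)
            (by simp) hN (hB l)
    _ = ∑ l : Fin (L + 1), Real.exp (-(t - 1) * s l.1) + Real.exp (-N) := by
        rw [Finset.sum_add_distrib]
        simp [mul_div_cancel₀ _ (by positivity : (L : ℝ) + 1 ≠ 0)]

lemma add_one_mul_exp_add_exp_neg_le {C D K X : ℝ} (hC : 0 ≤ C) (hK : 0 ≤ K)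
    (hX : C + K + 5 ≤ X) (hD : Real.log D ≤ K * X) (hN : (C + 1) * X ≤ N) :
    (D + 1) * Real.exp (-(C + K + 2) * (X - 1)) + Real.exp (-N) ≤ Real.exp (-C * X) := by
  have hD' : D + 1 ≤ 2 * Real.exp (K * X) := by
    have := (Real.le_exp_log D).trans (Real.exp_le_exp.2 hD)
    have := Real.one_le_exp (mul_nonneg hK (by linarith : 0 ≤ X))
    linarith
  have hexp3 : Real.exp (-3) ≤ 1 / 4 := by
    rw [Real.exp_neg, one_div]
    exact inv_anti₀ four_pos (by linarith [Real.add_one_le_exp 3])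
  have hsparse : (D + 1) * Real.exp (-(C + K + 2) * (X - 1)) ≤ 1 / 2 * Real.exp (-C * X) :=
    calc (D + 1) * Real.exp (-(C + K + 2) * (X - 1))
        ≤ 2 * Real.exp (K * X) * Real.exp (-(C + K + 2) * (X - 1)) := by gcongr
      _ = 2 * Real.exp (-C * X + (C + K + 2 - 2 * X)) := by
          rw [mul_assoc, ← Real.exp_add]
          ring_nf
      _ ≤ 2 * Real.exp (-C * X + -3) := by
          gcongr
          linarith
      _ ≤ 1 / 2 * Real.exp (-C * X) := by
          rw [Real.exp_add]
          nlinarith [Real.exp_pos (-C * X)]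
  have hgauss : Real.exp (-N) ≤ 1 / 2 * Real.exp (-C * X) :=
    calc Real.exp (-N) ≤ Real.exp (-C * X + -3) := Real.exp_le_exp.2 (by linarith)
      _ ≤ 1 / 2 * Real.exp (-C * X) := by
          rw [Real.exp_add]
          nlinarith [Real.exp_pos (-C * X)]
  linarith

lemma margGHS_not_inSieve_le_exp_neg (hd0 : 0 < d0) (hcreg : 0 < creg)
    (hk : ∀ l ≤ L, 1 ≤ k (l + 1)) (hlam : ∀ l, lam l ∈ Set.Icc 0 1) (hB0 : ∀ l, 0 ≤ B l)
    (hB : ∀ l, B l ^ 2 =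
      2 * (N + Real.log ((k l : ℝ) + 1) + Real.log (k (l + 1)) + Real.log ((L : ℝ) + 1) +
        Real.log 2) * ((k l : ℝ) + 1) ^ 2 * creg ^ 2)
    {C K X : ℝ} (hC : 0 ≤ C) (hK : 0 ≤ K) (hX : C + K + 5 ≤ X) (hL : Real.log L ≤ K * X)
    (hN : (C + 1) * X ≤ N) (hs : ∀ l, s l + 1 = X)
    (hlams : ∀ l ≤ L, lam l * k (l + 1) / s l < Real.exp (-(C + K + 3))) :
    margGHS L k lam d0 creg {θ | ¬InSieve L k s B θ} ≤ ENNReal.ofReal (Real.exp (-C * X)) := by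
  have hs' (l : ℕ) : s l = X - 1 := eq_sub_of_add_eq (hs l)
  have hmean (l : ℕ) (hl : l ≤ L) : Real.exp (C + K + 3) * (lam l * k (l + 1)) ≤ s l := by
    have hlt := (div_lt_iff₀ (by linarith [hs' l])).1 (hlams l hl)
    rw [Real.exp_neg, inv_mul_eq_div] at hlt
    exact ((lt_div_iff₀' (Real.exp_pos _)).1 hlt).le
  have hN0 : 0 ≤ N := le_trans (mul_nonneg (by linarith) (by linarith)) hN
  refine (margGHS_not_inSieve_le hd0 hcreg hk hlam hN0 hB0 hB (by linarith) hmean).trans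
    (ENNReal.ofReal_le_ofReal ?_)
  calc ∑ l : Fin (L + 1), Real.exp (-(C + K + 3 - 1) * s l.1) + Real.exp (-N)
      = ((L : ℝ) + 1) * Real.exp (-(C + K + 2) * (X - 1)) + Real.exp (-N) := by
        simp only [hs', Finset.sum_const, Finset.card_univ, Fintype.card_fin, nsmul_eq_mul]
        push_cast
        ring_nf
    _ ≤ Real.exp (-C * X) := add_one_mul_exp_add_exp_neg_le hC hK hX hL hN

end PrescribedBounds

section Asymptotics

lemma log_add_log_le_uLemGHS (n L : ℕ) (k : ℕ → ℕ) (creg : ℝ) :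
    Real.log n + Real.log (creg ^ 2) ≤ uLemGHS n L k creg := by
  have hL : 0 ≤ Real.log ((L : ℝ) + 1) := Real.log_nonneg (by simp)
  have hk : 0 ≤ ∑ m ∈ Finset.range (L + 1), Real.log (k m) :=
    Finset.sum_nonneg fun m _ => Real.log_natCast_nonneg _
  have hk1 : 0 ≤ ∑ m ∈ Finset.range (L + 1), Real.log ((k m : ℝ) + 1) :=
    Finset.sum_nonneg fun m _ => Real.log_nonneg (by simp)
  rw [uLemGHS, uLem]
  linarith

lemma tendsto_add_one_mul_uLemGHS_atTop (L : ℕ → ℕ) (k : ℕ → ℕ → ℕ) (creg : ℝ) :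
    Tendsto (fun n => ((L n : ℝ) + 1) * uLemGHS n (L n) (k n) creg) atTop atTop := by
  have hlog : Tendsto (fun n : ℕ => Real.log n + Real.log (creg ^ 2)) atTop atTop :=
    tendsto_atTop_add_const_right _ _ (Real.tendsto_log_atTop.comp tendsto_natCast_atTop_atTop)
  have hu : Tendsto (fun n => uLemGHS n (L n) (k n) creg) atTop atTop :=
    tendsto_atTop_mono (fun n => log_add_log_le_uLemGHS n (L n) (k n) creg) hlog
  refine tendsto_atTop_mono' _ ?_ hu
  filter_upwards [hu.eventually_ge_atTop 0] with n hn
  exact le_mul_of_one_le_left hn (by simp)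

theorem ssghs_prior_mass_sieve_complement_general
    (L : ℕ → ℕ) (k : ℕ → ℕ → ℕ) (hk : ∀ n, ∀ l ≤ L n, 1 ≤ k n (l + 1))
    (lam : ℕ → ℕ → ℝ) (hlam : ∀ n l, lam n l ∈ Set.Icc 0 1)
    (d0 creg : ℝ) (hd0 : 0 < d0) (hcreg : 0 < creg) (eps : ℕ → ℝ)
    (hnepsu : Tendsto
      (fun n : ℕ => (n : ℝ) * eps n ^ 2 / (((L n : ℝ) + 1) * uLemGHS n (L n) (k n) creg))
      atTop atTop)
    (so Bo : ℕ → ℕ → ℝ)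
    (hso : ∀ n l, so n l + 1 =
      (n : ℝ) * eps n ^ 2 / (((L n : ℝ) + 1) * uLemGHS n (L n) (k n) creg))
    (hBopos : ∀ n l, 0 ≤ Bo n l)
    (hBo : ∀ n l, Bo n l ^ 2 =
      2 * ((n : ℝ) * eps n ^ 2 + Real.log ((k n l : ℝ) + 1) + Real.log (k n (l + 1) : ℝ) +
          Real.log ((L n : ℝ) + 1) + Real.log 2) * ((k n l : ℝ) + 1) ^ 2 * creg ^ 2)
    (hlamso : ∀ ε > (0 : ℝ), ∀ᶠ n in atTop, ∀ l ≤ L n,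
      lam n l * (k n (l + 1) : ℝ) / so n l < ε)
    {K : ℝ} (hUlogL : ∀ᶠ n in atTop,
      (((L n : ℝ) + 1) * uLemGHS n (L n) (k n) creg) * Real.log (L n) ≤
        K * ((n : ℝ) * eps n ^ 2))
    (C : ℝ) :
    ∀ᶠ n in atTop,
      margGHS (L n) (k n) (lam n) d0 creg
          {θ | ¬ InSieve (L n) (k n) (so n) (Bo n) θ} ≤
        ENNReal.ofReal (Real.exp
          (-C * ((n : ℝ) * eps n ^ 2) /
            (((L n : ℝ) + 1) * uLemGHS n (L n) (k n) creg))) := by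
  filter_upwards [(tendsto_add_one_mul_uLemGHS_atTop L k creg).eventually_ge_atTop (|C| + 1),
    hnepsu.eventually_ge_atTop (|C| + |K| + 5), hlamso _ (Real.exp_pos (-(|C| + |K| + 3))),
    hUlogL] with n hU hX hlams hlogL
  set N := (n : ℝ) * eps n ^ 2
  set U := ((L n : ℝ) + 1) * uLemGHS n (L n) (k n) creg
  have hU0 : 0 < U := by linarith [abs_nonneg C]
  have hX0 : 0 ≤ N / U := by linarith [abs_nonneg C, abs_nonneg K]
  have hN : (|C| + 1) * (N / U) ≤ N :=
    calc (|C| + 1) * (N / U) ≤ U * (N / U) := by gcongr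
      _ = N := mul_div_cancel₀ N hU0.ne'
  have hL : Real.log (L n) ≤ |K| * (N / U) :=
    calc Real.log (L n) ≤ K * N / U := (le_div_iff₀' hU0).2 hlogL
      _ = K * (N / U) := mul_div_assoc K N U
      _ ≤ |K| * (N / U) := by gcongr; exact le_abs_self K
  refine (margGHS_not_inSieve_le_exp_neg hd0 hcreg (hk n) (hlam n) (hBopos n) (hBo n)
    (abs_nonneg C) (abs_nonneg K) hX hL hN (hso n) hlams).trans (ENNReal.ofReal_le_ofReal ?_)
  rw [mul_div_assoc (-C)]
  exact Real.exp_le_exp.2 (mul_le_mul_of_nonneg_right (neg_le_neg (le_abs_self C)) hX0)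

end Asymptotics

/-- **Lemma** (prior mass of the sieve complement, SS-GHS). -/
theorem ssghs_prior_mass_sieve_complement
    (p : ℕ) (η0 : (Fin p → ℝ) → ℝ) (hη0 : Continuous η0)
    (ψ : ℝ → ℝ)
    (L : ℕ → ℕ) (hL : ∀ n, 1 ≤ L n)
    (k : ℕ → ℕ → ℕ) (hk0 : ∀ n, k n 0 = p) (hkpos : ∀ n l, l ≤ L n → 1 ≤ k n l)
    (hkout : ∀ n, k n (L n + 1) = 1)
    -- SS-GHS prior hyperparameters, σ₀² = 1
    (lam : ℕ → ℕ → ℝ) (hlam01 : ∀ n l, 0 < lam n l ∧ lam n l ≤ 1)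
    (hlamL : ∀ n, lam n (L n) = 1)
    (d0 creg : ℝ) (hd0 : 0 < d0) (hcreg : 0 < creg)
    -- ε_n → 0, n ε_n² → ∞, n ε_n² / Σ u_l → ∞
    (eps : ℕ → ℝ) (hepspos : ∀ n, 0 < eps n)
    (heps0 : Tendsto eps atTop (nhds 0))
    (hneps : Tendsto (fun n : ℕ => (n : ℝ) * eps n ^ 2) atTop atTop)
    (hnepsu : Tendsto
      (fun n : ℕ => (n : ℝ) * eps n ^ 2 / (((L n : ℝ) + 1) * uLemGHS n (L n) (k n) creg))
      atTop atTop)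
    -- the sieve parameters s°, B° (here (B_l°)² is prescribed)
    (so Bo : ℕ → ℕ → ℝ)
    (hso : ∀ n l, so n l + 1 =
      (n : ℝ) * eps n ^ 2 / (((L n : ℝ) + 1) * uLemGHS n (L n) (k n) creg))
    (hBopos : ∀ n l, 0 ≤ Bo n l)
    (hBo : ∀ n l, Bo n l ^ 2 =
      2 * ((n : ℝ) * eps n ^ 2 + Real.log ((k n l : ℝ) + 1) + Real.log (k n (l + 1) : ℝ) +
          Real.log ((L n : ℝ) + 1) + Real.log 2) * ((k n l : ℝ) + 1) ^ 2 * creg ^ 2)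
    -- λ_l k_{l+1}/s_l° → 0 and (Σ u_l) log L = o(n ε_n²)
    (hlamso : ∀ ε > (0 : ℝ), ∀ᶠ n in atTop, ∀ l ≤ L n,
      lam n l * (k n (l + 1) : ℝ) / so n l < ε)
    (hUlogL : ∀ ε > (0 : ℝ), ∀ᶠ n in atTop,
      (((L n : ℝ) + 1) * uLemGHS n (L n) (k n) creg) * Real.log (L n) ≤
        ε * ((n : ℝ) * eps n ^ 2)) :
    -- conclusion
    ∃ C3 > (0 : ℝ), ∀ᶠ n in atTop,
      margGHS (L n) (k n) (lam n) d0 creg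
          {θ | ¬ InSieve (L n) (k n) (so n) (Bo n) θ} ≤
        ENNReal.ofReal (Real.exp
          (-C3 * ((n : ℝ) * eps n ^ 2) /
            (((L n : ℝ) + 1) * uLemGHS n (L n) (k n) creg))) := by
  have hwidth (n l : ℕ) (hl : l ≤ L n) : 1 ≤ k n (l + 1) := by
    rcases hl.lt_or_eq with hlt | rfl
    · exact hkpos n (l + 1) hlt
    · exact (hkout n).ge
  exact ⟨1, one_pos, ssghs_prior_mass_sieve_complement_general L k hwidth lam
    (fun n l => ⟨(hlam01 n l).1.le, (hlam01 n l).2⟩) d0 creg hd0 hcreg eps hnepsu so Bo hso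
    hBopos hBo hlamso (hUlogL 1 one_pos) 1⟩

end

end SSNN
end

section
/- Closed form for the KL divergence from a log-normal to an inverse-Gamma distribution: for every μ ∈ ℝ, σ > 0, a > 0 and b > 0, d_KL( LN(μ, σ²), InverseGamma(a, b) ) = log Γ(a) − a log b + a μ + b e^{−μ + σ²/2} − log σ − (1/2) log(2π) − 1/2. -/
open MeasureTheory ProbabilityTheory Filter

namespace SSNN

noncomputable section

/-! Write `Q = LN(μ, σ²)` with density `q`, and let `p` be the inverse-Gamma density. The divergence
is `E_Q[log q] - E_Q[log p]`. On `(0, ∞)`, `log q` is a quadratic polynomial in `log x`, while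
`log p` is an affine combination of `log x` and `x⁻¹`. Under `Q` the variable `log x` has law
`N(μ, σ²)`, so only the Gaussian mean and variance and the Gaussian moment generating function at
`-1` enter. -/

section Integration

variable {E : Type*} [NormedAddCommGroup E] [NormedSpace ℝ E] {m σ : ℝ}

theorem integral_const_sub_sub [CompleteSpace E] {Ω : Type*} [MeasurableSpace Ω] {P : Measure Ω}
    [IsProbabilityMeasure P] {f g : Ω → E} (c : E) (hf : Integrable f P) (hg : Integrable g P) :
    ∫ ω, (c - f ω - g ω) ∂P = c - ∫ ω, f ω ∂P - ∫ ω, g ω ∂P := by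
  have integrable_const_sub : Integrable (fun ω => c - f ω) P := (integrable_const c).sub hf
  rw [integral_sub integrable_const_sub hg, integral_sub (integrable_const c) hf, integral_const,
    probReal_univ, one_smul]

theorem integral_Ioi_zero_eq_integral_exp_smul (f : ℝ → E) :
    ∫ x in Set.Ioi (0 : ℝ), f x = ∫ y, Real.exp y • f (Real.exp y) := by
  have change_variables := integral_image_eq_integral_abs_deriv_smul MeasurableSet.univ
    (fun y _ => (Real.hasDerivAt_exp y).hasDerivWithinAt) Real.exp_injective.injOn f
  simpa only [Set.image_univ, Real.range_exp, Measure.restrict_univ, Real.abs_exp]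
    using change_variables

theorem exp_mul_logNormalPDF_exp (m σ y : ℝ) :
    Real.exp y * logNormalPDF m σ (Real.exp y) = gaussianPDFReal m (σ ^ 2).toNNReal y := by
  rw [logNormalPDF, if_pos (Real.exp_pos y), gaussianPDFReal, Real.log_exp,
    Real.coe_toNNReal _ (sq_nonneg σ)]
  field_simp

theorem setIntegral_logNormalPDF_smul (hσ : σ ≠ 0) (f : ℝ → E) :
    ∫ x in Set.Ioi (0 : ℝ), logNormalPDF m σ x • f x = ∫ x, f x ∂logNormal m (σ ^ 2) := by
  have variance_ne_zero : (σ ^ 2).toNNReal ≠ 0 := (Real.toNNReal_pos.2 (by positivity)).ne'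
  rw [integral_Ioi_zero_eq_integral_exp_smul, logNormal,
    Real.isOpenEmbedding_exp.measurableEmbedding.integral_map,
    integral_gaussianReal_eq_integral_smul variance_ne_zero]
  simp only [smul_smul, exp_mul_logNormalPDF_exp]

end Integration

section Moments

variable {m s2 : ℝ}

instance isProbabilityMeasure_logNormal (m s2 : ℝ) : IsProbabilityMeasure (logNormal m s2) :=
  Measure.isProbabilityMeasure_map Real.measurable_exp.aemeasurable

theorem ae_pos_logNormal (m s2 : ℝ) : ∀ᵐ x ∂logNormal m s2, 0 < x :=
  (ae_map_iff Real.measurable_exp.aemeasurable measurableSet_Ioi).2 (ae_of_all _ Real.exp_pos)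

theorem hasLaw_log_logNormal (m s2 : ℝ) :
    HasLaw Real.log (gaussianReal m s2.toNNReal) (logNormal m s2) where
  aemeasurable := Real.measurable_log.aemeasurable
  map_eq := by
    rw [logNormal, Measure.map_map Real.measurable_log Real.measurable_exp]
    simp only [Function.comp_def, Real.log_exp, Measure.map_id']

theorem memLp_log_logNormal (m s2 : ℝ) {p : ENNReal} (hp : p ≠ ⊤) :
    MemLp Real.log p (logNormal m s2) := by
  have memLp_id := memLp_id_gaussianReal' (μ := m) (v := s2.toNNReal) p hp
  rw [← (hasLaw_log_logNormal m s2).map_eq] at memLp_id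
  exact memLp_id.comp_of_map Real.measurable_log.aemeasurable

theorem integrable_log_logNormal (m s2 : ℝ) : Integrable Real.log (logNormal m s2) :=
  memLp_one_iff_integrable.1 (memLp_log_logNormal m s2 ENNReal.one_ne_top)

theorem integrable_log_sub_sq_logNormal (m s2 c : ℝ) :
    Integrable (fun x => (Real.log x - c) ^ 2) (logNormal m s2) :=
  ((memLp_log_logNormal m s2 ENNReal.ofNat_ne_top).sub (memLp_const c)).integrable_sq

theorem integral_log_logNormal (m s2 : ℝ) : ∫ x, Real.log x ∂logNormal m s2 = m :=
  (hasLaw_log_logNormal m s2).integral_eq.trans integral_id_gaussianReal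

theorem integral_log_sub_sq_logNormal (hs2 : 0 ≤ s2) :
    ∫ x, (Real.log x - m) ^ 2 ∂logNormal m s2 = s2 := by
  have variance_log : Var[Real.log; logNormal m s2] = s2 := by
    rw [(hasLaw_log_logNormal m s2).variance_eq, variance_id_gaussianReal,
      Real.coe_toNNReal _ hs2]
  rwa [variance_eq_integral Real.measurable_log.aemeasurable, integral_log_logNormal]
    at variance_log

theorem rpow_ae_eq_exp_mul_log_logNormal (m s2 t : ℝ) :
    (fun x => x ^ t) =ᵐ[logNormal m s2] fun x => Real.exp (t * Real.log x) := by
  filter_upwards [ae_pos_logNormal m s2] with x hx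
  rw [Real.rpow_def_of_pos hx, mul_comm]

theorem integrable_rpow_logNormal (m s2 t : ℝ) :
    Integrable (fun x => x ^ t) (logNormal m s2) := by
  have integrable_exp := integrable_exp_mul_gaussianReal (μ := m) (v := s2.toNNReal) t
  rw [← (hasLaw_log_logNormal m s2).map_eq] at integrable_exp
  exact (integrable_exp.comp_measurable Real.measurable_log).congr
    (rpow_ae_eq_exp_mul_log_logNormal m s2 t).symm

theorem integral_rpow_logNormal (hs2 : 0 ≤ s2) (t : ℝ) :
    ∫ x, x ^ t ∂logNormal m s2 = Real.exp (m * t + s2 * t ^ 2 / 2) :=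
  calc
    ∫ x, x ^ t ∂logNormal m s2 = mgf Real.log (logNormal m s2) t :=
      integral_congr_ae (rpow_ae_eq_exp_mul_log_logNormal m s2 t)
    _ = Real.exp (m * t + s2 * t ^ 2 / 2) := by
      rw [mgf_gaussianReal (hasLaw_log_logNormal m s2).map_eq, Real.coe_toNNReal _ hs2]

theorem integrable_inv_logNormal (m s2 : ℝ) : Integrable (fun x => x⁻¹) (logNormal m s2) := by
  simpa only [Real.rpow_neg_one] using integrable_rpow_logNormal m s2 (-1)

theorem integral_inv_logNormal (hs2 : 0 ≤ s2) :
    ∫ x, x⁻¹ ∂logNormal m s2 = Real.exp (-m + s2 / 2) := by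
  simpa only [Real.rpow_neg_one, mul_neg_one, neg_one_sq, mul_one]
    using integral_rpow_logNormal (m := m) hs2 (-1)

end Moments

section LogDensities

variable {m σ a b x : ℝ}

theorem logNormalPDF_pos (hσ : σ ≠ 0) (hx : 0 < x) : 0 < logNormalPDF m σ x := by
  rw [logNormalPDF, if_pos hx]
  positivity

theorem invGammaPDF_pos (ha : 0 < a) (hb : 0 < b) (hx : 0 < x) : 0 < invGammaPDF a b x := by
  have := Real.Gamma_pos_of_pos ha
  rw [invGammaPDF, if_pos hx]
  positivity

theorem log_logNormalPDF (hσ : 0 < σ) (hx : 0 < x) :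
    Real.log (logNormalPDF m σ x) =
      -(Real.log σ + 1 / 2 * Real.log (2 * Real.pi)) - Real.log x
        - 1 / (2 * σ ^ 2) * (Real.log x - m) ^ 2 := by
  have log_normalization : Real.log (Real.sqrt (2 * Real.pi * σ ^ 2)) =
      Real.log σ + 1 / 2 * Real.log (2 * Real.pi) := by
    rw [Real.sqrt_mul (by positivity), Real.sqrt_sq hσ.le,
      Real.log_mul (by positivity) hσ.ne', Real.log_sqrt (by positivity)]
    ring
  rw [logNormalPDF, if_pos hx, Real.log_mul (by positivity) (by positivity),
    Real.log_mul (by positivity) (by positivity), Real.log_inv, Real.log_inv, Real.log_exp,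
    log_normalization]
  ring

theorem log_invGammaPDF (ha : 0 < a) (hb : 0 < b) (hx : 0 < x) :
    Real.log (invGammaPDF a b x) =
      a * Real.log b - Real.log (Real.Gamma a) - (a + 1) * Real.log x - b * x⁻¹ := by
  have hΓ := Real.Gamma_pos_of_pos ha
  rw [invGammaPDF, if_pos hx, Real.log_mul (by positivity) (by positivity),
    Real.log_mul (by positivity) (by positivity), Real.log_div (by positivity) hΓ.ne',
    Real.log_rpow hb, Real.log_rpow hx, Real.log_exp]
  ring

theorem log_logNormalPDF_ae_eq (m m' s2 : ℝ) (hσ : 0 < σ) :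
    (fun x => Real.log (logNormalPDF m σ x)) =ᵐ[logNormal m' s2] fun x =>
      -(Real.log σ + 1 / 2 * Real.log (2 * Real.pi)) - Real.log x
        - 1 / (2 * σ ^ 2) * (Real.log x - m) ^ 2 :=
  (ae_pos_logNormal m' s2).mono fun _ => log_logNormalPDF hσ

theorem log_invGammaPDF_ae_eq (m s2 : ℝ) (ha : 0 < a) (hb : 0 < b) :
    (fun x => Real.log (invGammaPDF a b x)) =ᵐ[logNormal m s2] fun x =>
      a * Real.log b - Real.log (Real.Gamma a) - (a + 1) * Real.log x - b * x⁻¹ :=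
  (ae_pos_logNormal m s2).mono fun _ => log_invGammaPDF ha hb

theorem integrable_log_logNormalPDF (m m' s2 : ℝ) (hσ : 0 < σ) :
    Integrable (fun x => Real.log (logNormalPDF m σ x)) (logNormal m' s2) :=
  (((integrable_const _).sub (integrable_log_logNormal m' s2)).sub
    ((integrable_log_sub_sq_logNormal m' s2 m).const_mul _)).congr
    (log_logNormalPDF_ae_eq m m' s2 hσ).symm

theorem integrable_log_invGammaPDF (m s2 : ℝ) (ha : 0 < a) (hb : 0 < b) :
    Integrable (fun x => Real.log (invGammaPDF a b x)) (logNormal m s2) :=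
  (((integrable_const _).sub ((integrable_log_logNormal m s2).const_mul _)).sub
    ((integrable_inv_logNormal m s2).const_mul b)).congr
    (log_invGammaPDF_ae_eq m s2 ha hb).symm

theorem integral_log_logNormalPDF (m : ℝ) (hσ : 0 < σ) :
    ∫ x, Real.log (logNormalPDF m σ x) ∂logNormal m (σ ^ 2) =
      -(Real.log σ + 1 / 2 * Real.log (2 * Real.pi)) - m - 1 / 2 := by
  rw [integral_congr_ae (log_logNormalPDF_ae_eq m m (σ ^ 2) hσ),
    integral_const_sub_sub _ (integrable_log_logNormal m (σ ^ 2))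
      ((integrable_log_sub_sq_logNormal m (σ ^ 2) m).const_mul _),
    integral_const_mul, integral_log_logNormal, integral_log_sub_sq_logNormal (sq_nonneg σ)]
  field_simp

theorem integral_log_invGammaPDF {s2 : ℝ} (m : ℝ) (hs2 : 0 ≤ s2) (ha : 0 < a) (hb : 0 < b) :
    ∫ x, Real.log (invGammaPDF a b x) ∂logNormal m s2 =
      a * Real.log b - Real.log (Real.Gamma a) - (a + 1) * m - b * Real.exp (-m + s2 / 2) := by
  rw [integral_congr_ae (log_invGammaPDF_ae_eq m s2 ha hb),
    integral_const_sub_sub _ ((integrable_log_logNormal m s2).const_mul _)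
      ((integrable_inv_logNormal m s2).const_mul b),
    integral_const_mul, integral_const_mul, integral_log_logNormal, integral_inv_logNormal hs2]

theorem log_logNormalPDF_div_invGammaPDF_ae_eq (m m' s2 : ℝ) (hσ : σ ≠ 0) (ha : 0 < a)
    (hb : 0 < b) :
    (fun x => Real.log (logNormalPDF m σ x / invGammaPDF a b x)) =ᵐ[logNormal m' s2] fun x =>
      Real.log (logNormalPDF m σ x) - Real.log (invGammaPDF a b x) :=
  (ae_pos_logNormal m' s2).mono fun _ hx =>
    Real.log_div (logNormalPDF_pos hσ hx).ne' (invGammaPDF_pos ha hb hx).ne'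

end LogDensities

/-- **Lemma** (closed form for the KL divergence from a log-normal to an
inverse-Gamma distribution). -/
theorem kl_logNormal_invGamma
    (μ σ a b : ℝ) (hσ : 0 < σ) (ha : 0 < a) (hb : 0 < b) :
    (∫ x in Set.Ioi (0 : ℝ),
        logNormalPDF μ σ x * Real.log (logNormalPDF μ σ x / invGammaPDF a b x)) =
      Real.log (Real.Gamma a) - a * Real.log b + a * μ + b * Real.exp (-μ + σ ^ 2 / 2) -
        Real.log σ - (1 / 2) * Real.log (2 * Real.pi) - 1 / 2 := by
  have integrable_log_q := integrable_log_logNormalPDF μ μ (σ ^ 2) hσ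
  have integrable_log_p := integrable_log_invGammaPDF μ (σ ^ 2) ha hb
  calc
    _ = ∫ x, Real.log (logNormalPDF μ σ x / invGammaPDF a b x) ∂logNormal μ (σ ^ 2) :=
      setIntegral_logNormalPDF_smul hσ.ne' _
    _ = ∫ x, (Real.log (logNormalPDF μ σ x) - Real.log (invGammaPDF a b x))
          ∂logNormal μ (σ ^ 2) :=
      integral_congr_ae (log_logNormalPDF_div_invGammaPDF_ae_eq μ μ (σ ^ 2) hσ.ne' ha hb)
    _ = (-(Real.log σ + 1 / 2 * Real.log (2 * Real.pi)) - μ - 1 / 2) -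
          (a * Real.log b - Real.log (Real.Gamma a) - (a + 1) * μ -
            b * Real.exp (-μ + σ ^ 2 / 2)) := by
      rw [integral_sub integrable_log_q integrable_log_p, integral_log_logNormalPDF μ hσ,
        integral_log_invGammaPDF μ (sq_nonneg σ) ha hb]
    _ = _ := by ring

end

end SSNN
end

section
/- Scale-mixture representation of the half-Cauchy distribution: let k > 0 and let β and α be independent random variables with β ~ InverseGamma(1/2, 1) and α ~ Gamma(shape 1/2, rate 1/k²). Then √(βα) has the half-Cauchy distribution C⁺(0, k); equivalently, the density of √(βα) on (0, ∞) is t ↦ 2k / (π (k² + t²)). -/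
open MeasureTheory ProbabilityTheory Filter

namespace SSNN

noncomputable section

/-!
If `X ∼ Gamma(a, r)` and `Y ∼ Gamma(b, s)` are independent, the joint density of `X` and `T = Y / X`
is a function of `t` times the `Gamma(a + b, r + s t)` density in `x`. Integrating out `x` therefore
costs nothing and leaves a beta prime density for `T`. For `a = b = 1 / 2` this is, up to scale,
`1 / (π √t (1 + t))`, which the substitution `t ↦ t²` turns into the half-Cauchy density.
-/

open Set Real
open scoped ENNReal

theorem map_div_prod_withDensity {μ : Measure ℝ} [SFinite μ] (hμ : ∀ᵐ x ∂μ, x ≠ 0)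
    {g : ℝ → ℝ≥0∞} (hg : Measurable g) :
    (μ.prod (volume.withDensity g)).map (fun q => q.2 / q.1) =
      volume.withDensity fun t => ∫⁻ x, ENNReal.ofReal |x| * g (x * t) ∂μ := by
  refine Measure.ext_of_lintegral _ fun φ hφ => ?_
  have substitution : ∀ᵐ x ∂μ, ∫⁻ y, φ (y / x) ∂(volume.withDensity g) =
      ∫⁻ t, ENNReal.ofReal |x| * g (x * t) * φ t := by
    filter_upwards [hμ] with x hx
    rw [lintegral_withDensity_eq_lintegral_mul _ hg (by fun_prop)]
    conv_lhs => rw [← Real.smul_map_volume_mul_left hx]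
    rw [lintegral_smul_measure, lintegral_map (by fun_prop) (by fun_prop), smul_eq_mul,
      ← lintegral_const_mul _ (by fun_prop)]
    simp only [Pi.mul_apply, mul_div_cancel_left₀ _ hx, mul_assoc]
  have density_measurable : Measurable fun t => ∫⁻ x, ENNReal.ofReal |x| * g (x * t) ∂μ :=
    Measurable.lintegral_prod_left (by fun_prop)
  calc ∫⁻ z, φ z ∂(μ.prod (volume.withDensity g)).map (fun q => q.2 / q.1)
      = ∫⁻ x, ∫⁻ y, φ (y / x) ∂(volume.withDensity g) ∂μ := by
        rw [lintegral_map hφ (by fun_prop), lintegral_prod _ (by fun_prop)]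
    _ = ∫⁻ t, ∫⁻ x, ENNReal.ofReal |x| * g (x * t) * φ t ∂μ := by
        rw [lintegral_congr_ae substitution, lintegral_lintegral_swap (by fun_prop)]
    _ = ∫⁻ t, φ t ∂(volume.withDensity fun t => ∫⁻ x, ENNReal.ofReal |x| * g (x * t) ∂μ) := by
        rw [lintegral_withDensity_eq_lintegral_mul _ density_measurable hφ]
        exact lintegral_congr fun t => lintegral_mul_const _ (by fun_prop)

theorem map_sqrt_withDensity_Ioi {f : ℝ → ℝ≥0∞} (hf : Measurable f) :
    ((volume.restrict (Ioi 0)).withDensity f).map Real.sqrt =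
      (volume.restrict (Ioi 0)).withDensity fun t => ENNReal.ofReal (2 * t) * f (t ^ 2) := by
  refine Measure.ext_of_lintegral _ fun φ hφ => ?_
  have image_sq : (fun t : ℝ => t ^ 2) '' Ioi 0 = Ioi 0 :=
    Subset.antisymm (image_subset_iff.2 fun t ht => pow_pos (mem_Ioi.1 ht) 2)
      fun y hy => ⟨√y, Real.sqrt_pos.2 hy, Real.sq_sqrt (le_of_lt hy)⟩
  have sq_mono : MonotoneOn (fun t : ℝ => t ^ 2) (Ioi 0) := fun a ha b _ hab =>
    pow_le_pow_left₀ (le_of_lt ha) hab 2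
  have substitution := lintegral_image_eq_lintegral_deriv_mul_of_monotoneOn measurableSet_Ioi
    (fun t _ => by simpa using (hasDerivAt_pow 2 t).hasDerivWithinAt) sq_mono (fun y => f y * φ √y)
  rw [lintegral_map hφ (by fun_prop), lintegral_withDensity_eq_lintegral_mul _ hf (by fun_prop),
    lintegral_withDensity_eq_lintegral_mul _ (by fun_prop) hφ]
  simp only [Pi.mul_apply]
  rw [image_sq] at substitution
  rw [substitution]
  refine setLIntegral_congr_fun measurableSet_Ioi fun t ht => ?_
  simp only [Real.sqrt_sq (le_of_lt ht), mul_assoc]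

theorem withDensity_ofReal_ite_lt (μ : Measure ℝ) (c : ℝ) (f : ℝ → ℝ) :
    μ.withDensity (fun t => ENNReal.ofReal (if c < t then f t else 0)) =
      (μ.restrict (Ioi c)).withDensity fun t => ENNReal.ofReal (f t) := by
  rw [← withDensity_indicator measurableSet_Ioi]
  congr with t
  simp only [indicator_apply, mem_Ioi, apply_ite ENNReal.ofReal, ENNReal.ofReal_zero]

@[fun_prop]
theorem measurable_gammaPDF (a r : ℝ) : Measurable (gammaPDF a r) :=
  (measurable_gammaPDFReal a r).ennreal_ofReal

section BetaPrime

/-- The density of the beta prime distribution with shapes `α`, `β` and scale `σ`, the law of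
`Y / X` for independent `X ∼ Gamma(β, σ)` and `Y ∼ Gamma(α, 1)`. The power of `σ` is collected in
the numerator, so that the usual `(t / σ) ^ (α - 1) * (1 + t / σ) ^ (-(α + β)) / (σ * beta α β)`
has no nested quotients. -/
def betaPrimePDF (α β σ t : ℝ) : ℝ :=
  if 0 < t then σ ^ β * t ^ (α - 1) / (beta α β * (σ + t) ^ (α + β)) else 0

theorem betaPrimePDF_nonneg {α β σ : ℝ} (hα : 0 < α) (hβ : 0 < β) (hσ : 0 < σ) (t : ℝ) :
    0 ≤ betaPrimePDF α β σ t := by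
  have := beta_pos hα hβ
  unfold betaPrimePDF
  split_ifs <;> positivity

theorem betaPrimePDF_half_half {σ : ℝ} (hσ : 0 ≤ σ) :
    betaPrimePDF (1 / 2) (1 / 2) σ = sqrtHCpdf √σ := by
  ext t
  have beta_half : beta (1 / 2) (1 / 2) = π := by
    rw [beta, Gamma_one_half_eq, add_halves, Gamma_one, div_one, mul_self_sqrt pi_pos.le]
  unfold betaPrimePDF sqrtHCpdf
  split_ifs with ht
  · have rpow_neg_half : t ^ (1 / 2 - 1 : ℝ) = (√t)⁻¹ := by
      rw [sqrt_eq_rpow, ← rpow_neg ht.le]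
      norm_num
    rw [beta_half, add_halves, rpow_one, sq_sqrt hσ, ← sqrt_eq_rpow, rpow_neg_half]
    field_simp
  · rfl

variable {a b r s : ℝ}

theorem mul_gammaPDFReal_mul_gammaPDFReal (ha : 0 < a) (hb : 0 < b) (hr : 0 < r) (hs : 0 < s)
    {x t : ℝ} (hx : 0 < x) (ht : 0 < t) :
    x * gammaPDFReal b s (x * t) * gammaPDFReal a r x =
      betaPrimePDF b a (r / s) t * gammaPDFReal (a + b) (r + s * t) x := by
  have : 0 < r + s * t := by positivity
  have scale_rpow : (r / s + t) ^ (a + b) = (r + s * t) ^ (a + b) / (s ^ a * s ^ b) := by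
    rw [← rpow_add hs, ← div_rpow (by positivity) hs.le]
    congr 1
    field_simp
  have exponents : x ^ (a + b - 1) = x * x ^ (a - 1) * x ^ (b - 1) := by
    rw [← rpow_one_add' hx.le (by simpa using ha.ne'), ← rpow_add hx]
    ring_nf
  have exp_split : exp (-((r + s * t) * x)) = exp (-(s * (x * t))) * exp (-(r * x)) := by
    rw [← exp_add]
    ring_nf
  simp only [gammaPDFReal, betaPrimePDF, beta, if_pos ht, if_pos hx.le, if_pos (mul_pos hx ht).le,
    add_comm b a, scale_rpow, exponents, exp_split, mul_rpow hx.le ht.le, div_rpow hr.le hs.le]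
  field_simp

theorem lintegral_abs_mul_gammaPDF (ha : 0 < a) (hb : 0 < b) (hr : 0 < r) (hs : 0 < s) {t : ℝ}
    (ht : t ≠ 0) :
    ∫⁻ x, ENNReal.ofReal |x| * gammaPDF b s (x * t) ∂gammaMeasure a r =
      ENNReal.ofReal (betaPrimePDF b a (r / s) t) := by
  rw [gammaMeasure, lintegral_withDensity_eq_lintegral_mul _ (by fun_prop) (by fun_prop)]
  simp only [Pi.mul_apply]
  rcases ht.lt_or_gt with t_neg | t_pos
  · have integrand_zero (x : ℝ) :
        gammaPDF a r x * (ENNReal.ofReal |x| * gammaPDF b s (x * t)) = 0 := by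
      rcases lt_trichotomy x 0 with hx | rfl | hx
      · rw [gammaPDF_of_neg hx, zero_mul]
      · simp
      · rw [gammaPDF_of_neg (mul_neg_of_pos_of_neg hx t_neg), mul_zero, mul_zero]
    simp [integrand_zero, betaPrimePDF, t_neg.not_gt]
  · have factorization : ∀ᵐ x, gammaPDF a r x * (ENNReal.ofReal |x| * gammaPDF b s (x * t)) =
        ENNReal.ofReal (betaPrimePDF b a (r / s) t) * gammaPDF (a + b) (r + s * t) x := by
      filter_upwards [Measure.ae_ne volume 0] with x hx
      rcases hx.lt_or_gt with x_neg | x_pos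
      · rw [gammaPDF_of_neg x_neg, gammaPDF_of_neg x_neg, zero_mul, mul_zero]
      · rw [abs_of_pos x_pos, mul_comm]
        simp only [gammaPDF]
        rw [← ENNReal.ofReal_mul x_pos.le,
          ← ENNReal.ofReal_mul (mul_nonneg x_pos.le (gammaPDFReal_nonneg hb hs _)),
          ← ENNReal.ofReal_mul (betaPrimePDF_nonneg hb ha (div_pos hr hs) t),
          mul_gammaPDFReal_mul_gammaPDFReal ha hb hr hs x_pos t_pos]
    rw [lintegral_congr_ae factorization, lintegral_const_mul _ (by fun_prop),
      lintegral_gammaPDF_eq_one (by positivity) (by positivity), mul_one]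

theorem map_div_prod_gammaMeasure (ha : 0 < a) (hb : 0 < b) (hr : 0 < r) (hs : 0 < s) :
    ((gammaMeasure a r).prod (gammaMeasure b s)).map (fun q => q.2 / q.1) =
      volume.withDensity fun t => ENNReal.ofReal (betaPrimePDF b a (r / s) t) := by
  have := isProbabilityMeasure_gammaMeasure ha hr
  have ne_zero : ∀ᵐ x ∂gammaMeasure a r, x ≠ 0 :=
    (withDensity_absolutelyContinuous _ _).ae_le (Measure.ae_ne volume 0)
  rw [gammaMeasure.eq_def b s, map_div_prod_withDensity ne_zero (by fun_prop)]
  refine withDensity_congr_ae ?_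
  filter_upwards [Measure.ae_ne volume 0] with t ht
  exact lintegral_abs_mul_gammaPDF ha hb hr hs ht

theorem map_mul_invGammaM_prod_gammaM (ha : 0 < a) (hb : 0 < b) (hr : 0 < r) (hs : 0 < s) :
    ((invGammaM a r).prod (gammaM b s)).map (fun q => q.1 * q.2) =
      volume.withDensity fun t => ENNReal.ofReal (betaPrimePDF b a (r / s) t) := by
  have := isProbabilityMeasure_gammaMeasure ha hr
  have := isProbabilityMeasure_gammaMeasure hb hs
  rw [← map_div_prod_gammaMeasure ha hb hr hs, invGammaM, gammaM, gammaM]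
  nth_rw 1 [← Measure.map_id (μ := gammaMeasure b s)]
  rw [Measure.map_prod_map _ _ measurable_inv measurable_id,
    Measure.map_map (by fun_prop) (by fun_prop)]
  congr with q
  simp [div_eq_inv_mul]

end BetaPrime

theorem map_sqrt_withDensity_sqrtHCpdf (k : ℝ) :
    (volume.withDensity fun t => ENNReal.ofReal (sqrtHCpdf k t)).map Real.sqrt = halfCauchy k := by
  unfold sqrtHCpdf halfCauchy
  rw [withDensity_ofReal_ite_lt, withDensity_ofReal_ite_lt, map_sqrt_withDensity_Ioi (by fun_prop)]
  refine withDensity_congr_ae ?_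
  filter_upwards [ae_restrict_mem measurableSet_Ioi] with t ht
  have ht : 0 < t := ht
  rw [← ENNReal.ofReal_mul (by positivity), sqrt_sq ht.le]
  congr 1
  field_simp

theorem halfCauchy_scale_mixture_general {r s : ℝ} (hr : 0 < r) (hs : 0 < s) :
    ((invGammaM (1 / 2) r).prod (gammaM (1 / 2) s)).map (fun q => √(q.1 * q.2)) =
      halfCauchy √(r / s) :=
  calc ((invGammaM (1 / 2) r).prod (gammaM (1 / 2) s)).map (fun q => √(q.1 * q.2))
      = (((invGammaM (1 / 2) r).prod (gammaM (1 / 2) s)).map (fun q => q.1 * q.2)).map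
          Real.sqrt := (Measure.map_map (by fun_prop) (by fun_prop)).symm
    _ = (volume.withDensity fun t => ENNReal.ofReal (sqrtHCpdf √(r / s) t)).map Real.sqrt := by
        rw [map_mul_invGammaM_prod_gammaM one_half_pos one_half_pos hr hs,
          betaPrimePDF_half_half (by positivity)]
    _ = halfCauchy √(r / s) := map_sqrt_withDensity_sqrtHCpdf _

/-- **Lemma** (scale-mixture representation of the half-Cauchy distribution):
if `β ~ InverseGamma(1/2, 1)` and `α ~ Gamma(1/2, 1/k²)` are independent, then
`√(βα) ~ C⁺(0, k)`. -/
theorem halfCauchy_scale_mixture (k : ℝ) (hk : 0 < k) :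
    ((invGammaM (1 / 2) 1).prod (gammaM (1 / 2) (1 / k ^ 2))).map
        (fun q : ℝ × ℝ => Real.sqrt (q.1 * q.2)) =
      halfCauchy k := by
  simpa [hk.le] using halfCauchy_scale_mixture_general one_pos (one_div_pos.2 (pow_pos hk 2))

end

end SSNN
end
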